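/- arXiv:1810.10030 — 3 statements merged into one kernel-verified Lean document; each statement's English description precedes it below -/
import Mathlib

section
/- Let V be a nontrivial real Banach space, T ∈ (0,∞), ∠_T = {(s,t) ∈ [0,T]² : s ≤ t}, f ∈ C^{0,1}([0,T] × V, V) with spatial derivative f_{0,1}, and for every x ∈ V let (X^x_{s,t})_{(s,t) ∈ ∠_T} be continuous and satisfy X^x_{s,t} = x + ∫_s^t f(τ, X^x_{s,τ}) dτ. Then: (i) the map (s,t,x) ↦ X^x_{s,t} is continuously Fréchet differentiable in x with jointly continuous derivative; and (ii) for all x, y ∈ V and (s,t) ∈ ∠_T, (∂X^x_{s,t}/∂x) y = y + ∫_s^t f_{0,1}(τ, X^x_{s,τ}) (∂X^x_{s,τ}/∂x) y dτ, i.e., the spatial derivative solves the variational (first variation) equation. -/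
/-!
The spatial derivative is constructed as the solution `Δ` in `V →L[ℝ] V` of the variational
equation `Δ τ = 1 + ∫ σ in s..τ, F' σ (u σ) * Δ σ` along the trajectory `u` started at `(s, x)`.
The coefficient is continuous in time, so `Δ` exists as the sum of the Picard series
(`exists_linear_solution`). The rest is comparison of solutions of integral equations, always by
the same Gronwall estimate `fenced_gronwall`.

Since `V` may be infinite dimensional, `F` is Lipschitz only near compact sets. Around a
reference trajectory `γ`, compactness of `[0, T]` and continuity of `F'` give a tube on which
`F' τ` is uniformly close to `F' τ (γ τ)` (`exists_uniform_tube`), hence bounded. The Gronwall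
estimate is stated with a fence, so that a growth bound known only inside the tube suffices, and
the conclusion includes that the compared trajectory never leaves the tube. It is used three times:

* `traj_lipschitz`: trajectories started at `(s, x)` near `(s₀, x₀)` stay within
  `L * max ‖x - x₀‖ |s - s₀|` of `γ`, uniformly in time;
* `linear_solution_close`: solutions of the variational equation depend continuously on the
  coefficient and the initial time. With the previous item this gives joint continuity of `Δ`;
* `traj_hasFDerivAt`: for nearby `z`, the remainder `r = U z - U x - Δ (z - x)` satisfies
  `r τ = ∫ (F' (U x) r + o(‖U z - U x‖))`, and `‖U z - U x‖ ≤ L ‖z - x‖`, so `r = o(‖z - x‖)`.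

Trajectories `t ↦ X x s t`, given for `t ∈ [s, T]`, are extended to all of `ℝ` by freezing them
outside `[s, T]`, so that trajectories with different initial times can be compared.
-/

open MeasureTheory

/-! ### Gronwall estimate and uniform tubes -/

open Set Filter Topology in
/-- Gronwall estimate with a fence: the bound on the integrand `q` is only assumed at times when
`‖w τ‖ ≤ ε`, where `ε` dominates the resulting bound on `w`. There is no differentiability
assumption on `w`, which absorbs errors that are small but not smooth into `δ`. The strictly
positive `δ₁` makes the fence strict. -/
theorem fenced_gronwall {E : Type*} [NormedAddCommGroup E] [NormedSpace ℝ E] [CompleteSpace E]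
    {a b δ η δ₁ ε M : ℝ} {q w : ℝ → E} (hq : Continuous q) (hM : 0 ≤ M) (hδ₁ : 0 < δ₁)
    (hδ : δ ≤ δ₁) (hη : η ≤ δ₁) (hε : δ₁ * Real.exp ((M + 2) * (b - a)) ≤ ε)
    (hw : ∀ τ ∈ Icc a b, ‖w τ‖ ≤ δ + ‖∫ σ in a..τ, q σ‖)
    (hqw : ∀ τ ∈ Icc a b, ‖w τ‖ ≤ ε → ‖q τ‖ ≤ M * ‖w τ‖ + η) :
    ∀ τ ∈ Icc a b, ‖w τ‖ ≤ δ₁ * Real.exp ((M + 2) * (b - a)) := by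
  have hmono : ∀ τ ∈ Icc a b,
      δ₁ * Real.exp ((M + 2) * (τ - a)) ≤ δ₁ * Real.exp ((M + 2) * (b - a)) := by
    intro τ hτ
    have : τ - a ≤ b - a := by linarith [hτ.2]
    gcongr
  -- The fence argument is applied to the integral, with boundary
  -- `δ₁ * exp ((M + 2) * (τ - a)) - δ`.
  have hder : ∀ x, HasDerivAt (fun u => ∫ σ in a..u, q σ) (q x) x := fun x =>
    (hq.integral_hasStrictDerivAt a x).hasDerivAt
  have hB : ∀ x, HasDerivAt (fun τ => δ₁ * Real.exp ((M + 2) * (τ - a)) - δ)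
      (δ₁ * (Real.exp ((M + 2) * (x - a)) * (M + 2))) x := by
    intro x
    have h1 : HasDerivAt (fun τ => (M + 2) * (τ - a)) (M + 2) x := by
      simpa using ((hasDerivAt_id x).sub_const a).const_mul (M + 2)
    exact (h1.exp.const_mul δ₁).sub_const δ
  have key := image_norm_le_of_norm_deriv_right_lt_deriv_boundary (a := a) (b := b)
    (f := fun u => ∫ σ in a..u, q σ) (f' := q)
    (fun x _ => (hder x).continuousAt.continuousWithinAt)
    (fun x _ => (hder x).hasDerivWithinAt) (by simpa using hδ) hB (by
      intro x hx hxe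
      have hx' : x ∈ Icc a b := ⟨hx.1, hx.2.le⟩
      have h1 : ‖w x‖ ≤ δ₁ * Real.exp ((M + 2) * (x - a)) := by
        have := hw x hx'
        rw [hxe] at this
        linarith
      have h2 := hqw x hx' (h1.trans ((hmono x hx').trans hε))
      have he : (1 : ℝ) ≤ Real.exp ((M + 2) * (x - a)) :=
        Real.one_le_exp (mul_nonneg (by linarith) (by linarith [hx.1]))
      have h3 : M * ‖w x‖ ≤ M * (δ₁ * Real.exp ((M + 2) * (x - a))) := by gcongr
      have h4 : δ₁ * 1 ≤ δ₁ * Real.exp ((M + 2) * (x - a)) := by gcongr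
      calc ‖q x‖ ≤ M * (δ₁ * Real.exp ((M + 2) * (x - a))) + δ₁ := by linarith
        _ < δ₁ * (Real.exp ((M + 2) * (x - a)) * (M + 2)) := by nlinarith)
  intro τ hτ
  have h1 := key hτ
  have h2 := hw τ hτ
  have h3 := hmono τ hτ
  linarith

/-- A continuous `G` is uniformly continuous in space along a continuous curve over `[0, T]`,
even when `V` is not locally compact. -/
theorem exists_uniform_tube {V W : Type*} [NormedAddCommGroup V] [NormedAddCommGroup W]
    {G : ℝ → V → W} (hG : Continuous (fun p : ℝ × V => G p.1 p.2)) {γ : ℝ → V}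
    (hγ : Continuous γ) (T : ℝ) {η : ℝ} (hη : 0 < η) :
    ∃ ε > 0, ∀ τ ∈ Set.Icc 0 T, ∀ z, ‖z - γ τ‖ ≤ ε → ‖G τ z - G τ (γ τ)‖ ≤ η := by
  have hcont : Continuous (fun p : ℝ × V => ‖G p.1 (γ p.1 + p.2) - G p.1 (γ p.1)‖) := by
    have h1 : Continuous (fun p : ℝ × V => G p.1 (γ p.1 + p.2)) :=
      hG.comp (continuous_fst.prodMk ((hγ.comp continuous_fst).add continuous_snd))
    have h2 : Continuous (fun p : ℝ × V => G p.1 (γ p.1)) :=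
      hG.comp (continuous_fst.prodMk (hγ.comp continuous_fst))
    exact (h1.sub h2).norm
  obtain ⟨u, v, -, hv, hu, hv0, huv⟩ := generalized_tube_lemma
    (isCompact_Icc (a := (0 : ℝ)) (b := T)) (isCompact_singleton (x := (0 : V)))
    (isOpen_Iio.preimage hcont : IsOpen (_ ⁻¹' Set.Iio η)) (by
      rintro ⟨t, z⟩ ⟨-, hz⟩
      obtain rfl : z = 0 := hz
      simpa using hη)
  obtain ⟨ε, hε, hball⟩ := Metric.isOpen_iff.1 hv 0 (hv0 rfl)
  refine ⟨ε / 2, half_pos hε, fun τ hτ z hz => ?_⟩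
  have hm : z - γ τ ∈ v := hball (by
    rw [mem_ball_zero_iff]; linarith)
  have := huv (Set.mk_mem_prod (hu hτ) hm)
  simp only [Set.mem_preimage, Set.mem_Iio, add_sub_cancel] at this
  exact this.le

/-! ### Linear equations -/

/-- Global solution of a linear equation with bounded continuous coefficient, as the sum of the
Picard series, whose `n`-th term is at most `‖1‖ * (M * |τ - s|) ^ n / n!`. -/
theorem exists_linear_solution_of_bounded {R : Type*} [NormedRing R] [NormedAlgebra ℝ R]
    [CompleteSpace R] {A : ℝ → R} (hA : Continuous A) {M : ℝ}
    (hM : ∀ t, ‖A t‖ ≤ M) (s : ℝ) :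
    ∃ Δ : ℝ → R, Continuous Δ ∧ ∀ τ, Δ τ = 1 + ∫ σ in s..τ, A σ * Δ σ := by
  have hM0 : 0 ≤ M := (norm_nonneg _).trans (hM 0)
  let D : ℕ → ℝ → R := fun n => Nat.rec (fun _ => 1) (fun _ g τ => ∫ σ in s..τ, A σ * g σ) n
  have hD0 : ∀ τ, D 0 τ = 1 := fun _ => rfl
  have hDs : ∀ n τ, D (n + 1) τ = ∫ σ in s..τ, A σ * D n σ := fun _ _ => rfl
  have hDc : ∀ n, Continuous (D n) := by
    intro n
    induction n with
    | zero => exact continuous_const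
    | succ n ih =>
      refine continuous_iff_continuousAt.2 fun x => ?_
      exact ((hA.mul ih).integral_hasStrictDerivAt s x).hasDerivAt.continuousAt
  have hDb : ∀ n τ, ‖D n τ‖ ≤ ‖(1 : R)‖ * (M * |τ - s|) ^ n / n.factorial := by
    intro n
    induction n with
    | zero => intro τ; simp [hD0]
    | succ n ih =>
      intro τ
      rw [hDs]
      calc ‖∫ σ in s..τ, A σ * D n σ‖ ≤ ∫ σ in Set.uIoc s τ, ‖A σ * D n σ‖ :=
            intervalIntegral.norm_integral_le_integral_norm_uIoc
        _ ≤ ∫ σ in Set.uIoc s τ, (‖(1 : R)‖ * M ^ (n + 1) / n.factorial) * |σ - s| ^ n := by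
            refine integral_mono_of_nonneg (Filter.Eventually.of_forall fun σ => norm_nonneg _) ?_
              (Filter.Eventually.of_forall fun σ => ?_)
            · exact (Continuous.integrableOn_uIoc (by fun_prop))
            · calc ‖A σ * D n σ‖ ≤ ‖A σ‖ * ‖D n σ‖ := norm_mul_le _ _
                _ ≤ M * (‖(1 : R)‖ * (M * |σ - s|) ^ n / n.factorial) := by
                    gcongr
                    · exact hM σ
                    · exact ih σ
                _ = _ := by rw [mul_pow]; ring
        _ = _ := by
            rw [integral_const_mul, integral_pow_abs_sub_uIoc, Nat.factorial_succ, mul_pow]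
            push_cast
            field_simp
  have hsum : ∀ r : ℝ, Summable fun n : ℕ => ‖(1 : R)‖ * (M * r) ^ n / n.factorial := by
    intro r
    simpa [mul_div_assoc] using (Real.summable_pow_div_factorial (M * r)).mul_left ‖(1 : R)‖
  have hbr : ∀ n τ r, |τ - s| ≤ r → ‖D n τ‖ ≤ ‖(1 : R)‖ * (M * r) ^ n / n.factorial := by
    intro n τ r hr
    refine (hDb n τ).trans ?_
    gcongr
  have hDsum : ∀ τ, Summable fun n => D n τ := fun τ =>
    Summable.of_norm_bounded (hsum |τ - s|) fun n => hDb n τ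
  refine ⟨fun τ => ∑' n, D n τ, ?_, fun τ => ?_⟩
  · refine continuous_iff_continuousAt.2 fun x => ?_
    have h := continuousOn_tsum (s := Metric.ball s (|x - s| + 1)) (f := D)
      (fun n => (hDc n).continuousOn) (hsum (|x - s| + 1)) (by
        intro n τ hτ
        refine hbr n τ _ ?_
        rw [Metric.mem_ball, Real.dist_eq] at hτ
        exact hτ.le)
    refine h.continuousAt (Metric.isOpen_ball.mem_nhds ?_)
    rw [Metric.mem_ball, Real.dist_eq]
    linarith
  · have hint : HasSum (fun n => ∫ σ in s..τ, A σ * D n σ)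
        (∫ σ in s..τ, A σ * ∑' n, D n σ) := by
      refine intervalIntegral.hasSum_integral_of_dominated_convergence
        (fun n _ => M * (‖(1 : R)‖ * (M * |τ - s|) ^ n / n.factorial))
        (fun n => (hA.mul (hDc n)).aestronglyMeasurable) ?_ ?_ ?_ ?_
      · intro n
        refine Filter.Eventually.of_forall fun σ hσ => (norm_mul_le _ _).trans ?_
        have h1 : |σ - s| ≤ |τ - s| :=
          Set.abs_sub_left_of_mem_uIcc (Set.uIoc_subset_uIcc hσ)
        gcongr
        · exact hM σ
        · exact hbr n σ _ h1
      · exact Filter.Eventually.of_forall fun σ _ => (hsum _).mul_left M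
      · exact intervalIntegrable_const
      · exact Filter.Eventually.of_forall fun σ _ => (hDsum σ).hasSum.mul_left (A σ)
    change ∑' n, D n τ = _
    rw [(hDsum τ).tsum_eq_zero_add, hD0]
    congr 1
    exact hint.tsum_eq

theorem exists_linear_solution {R : Type*} [NormedRing R] [NormedAlgebra ℝ R]
    [CompleteSpace R] {A : ℝ → R} (hA : Continuous A) {T s : ℝ} (hs : s ∈ Set.Icc 0 T) :
    ∃ Δ : ℝ → R, Continuous Δ ∧ ∀ τ ∈ Set.Icc 0 T, Δ τ = 1 + ∫ σ in s..τ, A σ * Δ σ := by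
  have hT : 0 ≤ T := hs.1.trans hs.2
  obtain ⟨M, hM⟩ := (isCompact_Icc (a := (0 : ℝ)) (b := T)).exists_bound_of_continuousOn
    hA.continuousOn
  obtain ⟨Δ, hΔ, hΔe⟩ := exists_linear_solution_of_bounded
    (A := fun t => A (Set.projIcc 0 T hT t))
    (hA.comp (continuous_subtype_val.comp continuous_projIcc))
    (fun t => hM _ (Set.projIcc 0 T hT t).2) s
  refine ⟨Δ, hΔ, fun τ hτ => ?_⟩
  rw [hΔe τ]
  congr 1
  refine intervalIntegral.integral_congr fun σ hσ => ?_
  have hσ' : σ ∈ Set.Icc 0 T := Set.uIcc_subset_Icc hs hτ hσ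
  simp only [Set.projIcc_of_mem hT hσ']

/-- Continuous dependence of the solution of a linear equation on its coefficient and on the
initial time, uniformly in time. -/
theorem linear_solution_close {R : Type*} [NormedRing R] [NormedAlgebra ℝ R]
    [CompleteSpace R] {A₀ Δ₀ : ℝ → R} (hA₀ : Continuous A₀) (hΔ₀ : Continuous Δ₀)
    {T s₀ : ℝ} (hs₀ : s₀ ∈ Set.Icc 0 T)
    (hΔ₀e : ∀ τ ∈ Set.Icc 0 T, Δ₀ τ = 1 + ∫ σ in s₀..τ, A₀ σ * Δ₀ σ) {η : ℝ} (hη : 0 < η) :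
    ∃ κ > 0, ∀ s ∈ Set.Icc 0 T, ∀ A Δ : ℝ → R, Continuous A → Continuous Δ →
      (∀ τ ∈ Set.Icc 0 T, Δ τ = 1 + ∫ σ in s..τ, A σ * Δ σ) → |s - s₀| ≤ κ →
      (∀ τ ∈ Set.Icc s T, ‖A τ - A₀ τ‖ ≤ κ) → ∀ τ ∈ Set.Icc s T, ‖Δ τ - Δ₀ τ‖ ≤ η := by
  obtain ⟨M, hM⟩ := (isCompact_Icc (a := (0 : ℝ)) (b := T)).exists_bound_of_continuousOn
    hA₀.continuousOn
  obtain ⟨C, hC⟩ := (isCompact_Icc (a := (0 : ℝ)) (b := T)).exists_bound_of_continuousOn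
    hΔ₀.continuousOn
  have hM0 : 0 ≤ M := (norm_nonneg _).trans (hM s₀ hs₀)
  have hC0 : 0 ≤ C := (norm_nonneg _).trans (hC s₀ hs₀)
  set K : ℝ := Real.exp ((M + 1 + 2) * T) with hK
  have hK0 : 0 < K := Real.exp_pos _
  have hN : 0 < 1 + M * C + C := by positivity
  refine ⟨min 1 (η / ((1 + M * C + C) * K)), by positivity, ?_⟩
  set κ := min 1 (η / ((1 + M * C + C) * K)) with hκ
  have hκ0 : 0 < κ := by positivity
  have hκ1 : κ ≤ 1 := min_le_left _ _
  have hκ2 : κ * (1 + M * C + C) * K ≤ η := by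
    have : κ ≤ η / ((1 + M * C + C) * K) := min_le_right _ _
    rw [le_div_iff₀ (by positivity)] at this
    linarith
  intro s hs A Δ hA hΔ hΔe hss hAA τ hτ
  have hTs : Real.exp ((M + 1 + 2) * (T - s)) ≤ K := by
    rw [hK]
    have : T - s ≤ T := by linarith [hs.1]
    gcongr
  have hi : ∀ a b, IntervalIntegrable (fun σ => A σ * Δ σ) volume a b :=
    (hA.mul hΔ).intervalIntegrable
  have hi₀ : ∀ a b, IntervalIntegrable (fun σ => A₀ σ * Δ₀ σ) volume a b :=
    (hA₀.mul hΔ₀).intervalIntegrable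
  have hres := fenced_gronwall (a := s) (b := T) (δ := κ * (M * C)) (η := κ * C)
    (δ₁ := κ * (1 + M * C + C)) (M := M + 1) (q := fun σ => A σ * Δ σ - A₀ σ * Δ₀ σ)
    (w := fun σ => Δ σ - Δ₀ σ) ((hA.mul hΔ).sub (hA₀.mul hΔ₀)) (by positivity)
    (by positivity) (by gcongr; linarith) (by gcongr; nlinarith) le_rfl ?_ ?_ τ hτ
  · refine hres.trans (le_trans ?_ hκ2)
    gcongr
  · intro t ht
    have ht0 : t ∈ Set.Icc 0 T := ⟨hs.1.trans ht.1, ht.2⟩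
    have hsplit : Δ t - Δ₀ t = (∫ σ in s..s₀, A₀ σ * Δ₀ σ)
        + ∫ σ in s..t, (A σ * Δ σ - A₀ σ * Δ₀ σ) := by
      rw [hΔe t ht0, hΔ₀e t ht0, intervalIntegral.integral_sub (hi _ _) (hi₀ _ _),
        ← intervalIntegral.integral_add_adjacent_intervals (hi₀ s s₀) (hi₀ s₀ t)]
      abel
    have herr : ‖∫ σ in s..s₀, A₀ σ * Δ₀ σ‖ ≤ M * C * |s₀ - s| := by
      refine intervalIntegral.norm_integral_le_of_norm_le_const fun σ hσ => ?_
      have hσ' : σ ∈ Set.Icc 0 T :=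
        Set.uIcc_subset_Icc hs hs₀ (Set.uIoc_subset_uIcc hσ)
      exact (norm_mul_le _ _).trans
        (mul_le_mul (hM σ hσ') (hC σ hσ') (norm_nonneg _) hM0)
    have herr' : M * C * |s₀ - s| ≤ κ * (M * C) := by
      rw [abs_sub_comm, mul_comm]
      gcongr
    simp only [hsplit]
    exact (norm_add_le _ _).trans (by linarith)
  · intro t ht _
    have ht0 : t ∈ Set.Icc 0 T := ⟨hs.1.trans ht.1, ht.2⟩
    have hsplit : A t * Δ t - A₀ t * Δ₀ t
        = A t * (Δ t - Δ₀ t) + (A t - A₀ t) * Δ₀ t := by noncomm_ring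
    have hAt : ‖A t‖ ≤ M + 1 := by
      have h1 : A t = A₀ t + (A t - A₀ t) := by abel
      rw [h1]
      exact (norm_add_le _ _).trans (add_le_add (hM t ht0) ((hAA t ht).trans hκ1))
    simp only [hsplit]
    refine (norm_add_le _ _).trans (add_le_add ?_ ?_)
    · exact (norm_mul_le _ _).trans (by gcongr)
    · exact (norm_mul_le _ _).trans
        (mul_le_mul (hAA t ht) (hC t ht0) (norm_nonneg _) hκ0.le)

/-! ### Dependence of trajectories on initial data -/

/-- `u` is the trajectory of `u' = F t u` with value `x` at time `s`, up to time `T`, in integral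
form. It is a function on all of `ℝ`, constant before time `s`, and merely continuous after
time `T`. -/
structure IsTraj {V : Type*} [NormedAddCommGroup V] [NormedSpace ℝ V] (F : ℝ → V → V)
    (T s : ℝ) (x : V) (u : ℝ → V) : Prop where
  cont : Continuous u
  left : ∀ τ ≤ s, u τ = x
  eq : ∀ τ ∈ Set.Icc s T, u τ = x + ∫ σ in s..τ, F σ (u σ)

section

variable {V : Type*} [NormedAddCommGroup V] [NormedSpace ℝ V]
  {F : ℝ → V → V} {F' : ℝ → V → V →L[ℝ] V}

theorem mul_apply_eq (A B : V →L[ℝ] V) (v : V) : (A * B) v = A (B v) := rfl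

/-- Mean value inequality on the closed ball of radius `ε` around `y`: there, the linearization
of `F t` at `y` has error at most `η * ‖z - y‖` as soon as `F' t` oscillates by at most `η`. -/
theorem norm_remainder_le (hdiff : ∀ t x, HasFDerivAt (F t) (F' t x) x) {t ε η : ℝ} {y z : V}
    (hε : ∀ z, ‖z - y‖ ≤ ε → ‖F' t z - F' t y‖ ≤ η) (hz : ‖z - y‖ ≤ ε) :
    ‖F t z - F t y - F' t y (z - y)‖ ≤ η * ‖z - y‖ := by
  have hε0 : 0 ≤ ε := (norm_nonneg _).trans hz
  exact (convex_closedBall y ε).norm_image_sub_le_of_norm_hasFDerivWithin_le'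
    (fun x _ => (hdiff t x).hasFDerivWithinAt)
    (fun x hx => hε x (by simpa [dist_eq_norm] using hx))
    (Metric.mem_closedBall_self hε0) (by simpa [dist_eq_norm] using hz)

/-- Trajectories depend on the initial time and value in a Lipschitz way near a reference
trajectory `γ`, uniformly in time. -/
theorem traj_lipschitz [CompleteSpace V] (hF : Continuous (fun p : ℝ × V => F p.1 p.2))
    (hdiff : ∀ t x, HasFDerivAt (F t) (F' t x) x)
    (hF' : Continuous (fun p : ℝ × V => F' p.1 p.2))
    {T s₀ : ℝ} (hs₀ : s₀ ∈ Set.Icc 0 T) {x₀ : V} {γ : ℝ → V} (hγ : IsTraj F T s₀ x₀ γ) :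
    ∃ L > 0, ∃ δ₀ > 0, ∀ s ∈ Set.Icc 0 T, ∀ x u, IsTraj F T s x u → ∀ d, 0 < d → d ≤ δ₀ →
      ‖x - x₀‖ ≤ d → |s - s₀| ≤ d → ∀ τ ∈ Set.Icc s T, ‖u τ - γ τ‖ ≤ L * d := by
  have hFc : ∀ u : ℝ → V, Continuous u → Continuous fun σ => F σ (u σ) := fun u hu =>
    hF.comp (continuous_id.prodMk hu)
  obtain ⟨M, hM⟩ := (isCompact_Icc (a := (0 : ℝ)) (b := T)).exists_bound_of_continuousOn
    (hF'.comp (continuous_id.prodMk hγ.cont) : Continuous fun σ => F' σ (γ σ)).continuousOn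
  obtain ⟨C, hC⟩ := (isCompact_Icc (a := (0 : ℝ)) (b := T)).exists_bound_of_continuousOn
    (hFc γ hγ.cont).continuousOn
  obtain ⟨ε, hε, htube⟩ := exists_uniform_tube hF' hγ.cont T one_pos
  have hM0 : 0 ≤ M := (norm_nonneg _).trans (hM s₀ hs₀)
  have hC0 : 0 ≤ C := (norm_nonneg _).trans (hC s₀ hs₀)
  set K : ℝ := Real.exp ((M + 1 + 2) * T) with hK
  have hK0 : 0 < K := Real.exp_pos _
  have hL : 0 < (1 + C) * K := by positivity
  refine ⟨(1 + C) * K, hL, ε / ((1 + C) * K), by positivity, ?_⟩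
  intro s hs x u hu d hd hdδ hxd hsd τ hτ
  rw [le_div_iff₀ hL] at hdδ
  have hTs : Real.exp ((M + 1 + 2) * (T - s)) ≤ K := by
    rw [hK]
    have : T - s ≤ T := by linarith [hs.1]
    gcongr
  have hle : (1 + C) * d * Real.exp ((M + 1 + 2) * (T - s)) ≤ (1 + C) * K * d := by
    calc _ ≤ (1 + C) * d * K := by gcongr
      _ = _ := by ring
  have hiu : ∀ a b, IntervalIntegrable (fun σ => F σ (u σ)) volume a b :=
    (hFc u hu.cont).intervalIntegrable
  have hiγ : ∀ a b, IntervalIntegrable (fun σ => F σ (γ σ)) volume a b :=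
    (hFc γ hγ.cont).intervalIntegrable
  -- When `s < s₀`, the curve `γ` is constant on `[s, s₀]`, so it solves the equation started at
  -- time `s` up to an error of size `C * |s - s₀|`; the same bound holds when `s₀ ≤ s`.
  have herr : ∀ t ∈ Set.Icc s T, ‖x₀ + (∫ σ in s..t, F σ (γ σ)) - γ t‖ ≤ C * d := by
    intro t ht
    have ht0 : t ∈ Set.Icc 0 T := ⟨hs.1.trans ht.1, ht.2⟩
    have hbd : ∀ b ∈ Set.Icc 0 T, ‖∫ σ in s..b, F σ (γ σ)‖ ≤ C * |b - s| := by
      intro b hb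
      exact intervalIntegral.norm_integral_le_of_norm_le_const fun σ hσ =>
        hC σ (Set.uIcc_subset_Icc hs hb (Set.uIoc_subset_uIcc hσ))
    rcases le_total s₀ t with h | h
    · rw [hγ.eq t ⟨h, ht.2⟩,
        ← intervalIntegral.integral_add_adjacent_intervals (hiγ s s₀) (hiγ s₀ t)]
      have : x₀ + ((∫ σ in s..s₀, F σ (γ σ)) + ∫ σ in s₀..t, F σ (γ σ))
          - (x₀ + ∫ σ in s₀..t, F σ (γ σ)) = ∫ σ in s..s₀, F σ (γ σ) := by abel
      rw [this]
      refine (hbd s₀ hs₀).trans ?_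
      rw [abs_sub_comm]
      gcongr
    · rw [hγ.left t h, add_sub_cancel_left]
      refine (hbd t ht0).trans ?_
      have h1 : |t - s| ≤ |s - s₀| := by
        rw [abs_of_nonneg (by linarith [ht.1]), abs_sub_comm,
          abs_of_nonneg (by linarith [ht.1])]
        linarith
      have h2 := h1.trans hsd
      gcongr
  have hres := fenced_gronwall (a := s) (b := T) (δ := (1 + C) * d) (η := 0)
    (δ₁ := (1 + C) * d) (M := M + 1) (ε := ε) (q := fun σ => F σ (u σ) - F σ (γ σ))
    (w := fun σ => u σ - γ σ) ((hFc u hu.cont).sub (hFc γ hγ.cont)) (by positivity)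
    (by positivity) le_rfl (by positivity) (hle.trans (by linarith)) ?_ ?_ τ hτ
  · exact hres.trans hle
  · intro t ht
    have hsplit : u t - γ t = (x - x₀) + (x₀ + (∫ σ in s..t, F σ (γ σ)) - γ t)
        + ∫ σ in s..t, (F σ (u σ) - F σ (γ σ)) := by
      rw [intervalIntegral.integral_sub (hiu _ _) (hiγ _ _), hu.eq t ht]
      abel
    simp only [hsplit]
    refine (norm_add_le _ _).trans (add_le_add ((norm_add_le _ _).trans ?_) le_rfl)
    linarith [herr t ht]
  · intro t ht hw
    have ht0 : t ∈ Set.Icc 0 T := ⟨hs.1.trans ht.1, ht.2⟩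
    have h1 := norm_remainder_le hdiff (htube t ht0) hw
    have h2 : ‖F' t (γ t) (u t - γ t)‖ ≤ M * ‖u t - γ t‖ :=
      (ContinuousLinearMap.le_opNorm _ _).trans (by gcongr; exact hM t ht0)
    have h3 := norm_add_le (F t (u t) - F t (γ t) - F' t (γ t) (u t - γ t))
      (F' t (γ t) (u t - γ t))
    rw [sub_add_cancel] at h3
    linarith

/-- A solution of the variational equation along the trajectory from `x` is the Fréchet derivative
at `x` of the trajectory with respect to its initial value. -/
theorem traj_hasFDerivAt [CompleteSpace V] (hF : Continuous (fun p : ℝ × V => F p.1 p.2))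
    (hdiff : ∀ t x, HasFDerivAt (F t) (F' t x) x)
    (hF' : Continuous (fun p : ℝ × V => F' p.1 p.2))
    {T s : ℝ} (hs : s ∈ Set.Icc 0 T) {U : V → ℝ → V} (hU : ∀ z, IsTraj F T s z (U z)) {x : V}
    {Δ : ℝ → V →L[ℝ] V} (hΔ : Continuous Δ)
    (hΔe : ∀ τ ∈ Set.Icc 0 T, Δ τ = 1 + ∫ σ in s..τ, F' σ (U x σ) * Δ σ)
    {t : ℝ} (ht : t ∈ Set.Icc s T) : HasFDerivAt (fun z => U z t) (Δ t) x := by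
  obtain ⟨L, hL, δ₀, hδ₀, hlip⟩ := traj_lipschitz hF hdiff hF' hs (hU x)
  have hFc : ∀ z, Continuous fun σ => F σ (U z σ) := fun z =>
    hF.comp (continuous_id.prodMk (hU z).cont)
  have hAc : Continuous fun σ => F' σ (U x σ) :=
    hF'.comp (continuous_id.prodMk (hU x).cont)
  obtain ⟨M, hM⟩ := (isCompact_Icc (a := (0 : ℝ)) (b := T)).exists_bound_of_continuousOn
    hAc.continuousOn
  have hM0 : 0 ≤ M := (norm_nonneg _).trans (hM s hs)
  set K : ℝ := Real.exp ((M + 2) * (T - s)) with hK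
  have hK0 : 0 < K := Real.exp_pos _
  rw [hasFDerivAt_iff_isLittleO, Asymptotics.isLittleO_iff]
  intro c hc
  have hη : 0 < c / (L * K) := by positivity
  obtain ⟨ε, hε, htube⟩ := exists_uniform_tube hF' (hU x).cont T hη
  have hr : 0 < min δ₀ (ε / L) := by positivity
  filter_upwards [Metric.ball_mem_nhds x hr] with z hz
  rw [Metric.mem_ball, dist_eq_norm, lt_min_iff, lt_div_iff₀ hL] at hz
  rcases eq_or_ne z x with rfl | hzx
  · simp
  have hd : 0 < ‖z - x‖ := norm_pos_iff.2 (sub_ne_zero.2 hzx)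
  have hw : ∀ τ ∈ Set.Icc s T, ‖U z τ - U x τ‖ ≤ L * ‖z - x‖ :=
    hlip s hs z (U z) (hU z) _ hd hz.1.le le_rfl (by simp)
  have hΔz : Continuous fun σ => (F' σ (U x σ) * Δ σ) (z - x) :=
    (hAc.mul hΔ).clm_apply continuous_const
  have hres := fenced_gronwall (a := s) (b := T) (δ := 0) (η := c / (L * K) * (L * ‖z - x‖))
    (δ₁ := c / (L * K) * (L * ‖z - x‖)) (M := M)
    (q := fun σ => F σ (U z σ) - F σ (U x σ) - (F' σ (U x σ) * Δ σ) (z - x))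
    (w := fun σ => U z σ - U x σ - Δ σ (z - x)) (((hFc z).sub (hFc x)).sub hΔz) hM0
    (by positivity) (by positivity) le_rfl le_rfl ?_ ?_ t ht
  · refine hres.trans (le_of_eq ?_)
    rw [← hK]
    field_simp
  · intro τ hτ
    have hτ0 : τ ∈ Set.Icc 0 T := ⟨hs.1.trans hτ.1, hτ.2⟩
    have hsplit : U z τ - U x τ - Δ τ (z - x)
        = ∫ σ in s..τ, (F σ (U z σ) - F σ (U x σ) - (F' σ (U x σ) * Δ σ) (z - x)) := by
      rw [intervalIntegral.integral_sub
          (((hFc z).intervalIntegrable _ _).sub ((hFc x).intervalIntegrable _ _))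
          (hΔz.intervalIntegrable _ _),
        intervalIntegral.integral_sub ((hFc z).intervalIntegrable _ _)
          ((hFc x).intervalIntegrable _ _),
        (hU z).eq τ hτ, (hU x).eq τ hτ, hΔe τ hτ0,
        ← ContinuousLinearMap.intervalIntegral_apply
          (φ := fun σ => F' σ (U x σ) * Δ σ) ((hAc.mul hΔ).intervalIntegrable _ _)]
      simp only [add_apply, one_apply_eq_self]
      abel
    simp only [hsplit, zero_add, le_refl]
  · intro τ hτ _
    have hτ0 : τ ∈ Set.Icc 0 T := ⟨hs.1.trans hτ.1, hτ.2⟩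
    have hsplit : F τ (U z τ) - F τ (U x τ) - (F' τ (U x τ) * Δ τ) (z - x)
        = F' τ (U x τ) (U z τ - U x τ - Δ τ (z - x))
          + (F τ (U z τ) - F τ (U x τ) - F' τ (U x τ) (U z τ - U x τ)) := by
      simp only [mul_apply_eq, map_sub]
      abel
    have h1 := norm_remainder_le hdiff (htube τ hτ0) ((hw τ hτ).trans (by linarith))
    simp only [hsplit]
    refine (norm_add_le _ _).trans (add_le_add ?_ (h1.trans ?_))
    · exact (ContinuousLinearMap.le_opNorm _ _).trans (by gcongr; exact hM τ hτ0)
    · gcongr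
      exact hw τ hτ

end

/-! ### The variational equation for the flow -/

/-- Differentiability of the solution of a Banach space valued ODE
with respect to the initial value, and the variational (first variation) equation
for the spatial derivative of the flow. -/
theorem flow_differentiable_in_initial_value
    {V : Type*} [NormedAddCommGroup V] [NormedSpace ℝ V] [CompleteSpace V]
    [Nontrivial V] {T : ℝ} (hT : 0 < T)
    (f : ℝ → V → V) (f' : ℝ → V → V →L[ℝ] V)
    (hf : ContinuousOn (fun p : ℝ × V => f p.1 p.2) (Set.Icc 0 T ×ˢ Set.univ))
    (hdiff : ∀ t ∈ Set.Icc (0 : ℝ) T, ∀ x : V, HasFDerivAt (f t) (f' t x) x)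
    (hf' : ContinuousOn (fun p : ℝ × V => f' p.1 p.2) (Set.Icc 0 T ×ˢ Set.univ))
    (X : V → ℝ → ℝ → V)
    (hXcont : ∀ x : V, ContinuousOn (fun p : ℝ × ℝ => X x p.1 p.2)
      {p : ℝ × ℝ | 0 ≤ p.1 ∧ p.1 ≤ p.2 ∧ p.2 ≤ T})
    (hXeq : ∀ (x : V) (p : ℝ × ℝ), (0 ≤ p.1 ∧ p.1 ≤ p.2 ∧ p.2 ≤ T) →
      X x p.1 p.2 = x + ∫ τ in p.1..p.2, f τ (X x p.1 τ)) :
    ∃ D : ℝ → ℝ → V → V →L[ℝ] V,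
      (∀ p : ℝ × ℝ, (0 ≤ p.1 ∧ p.1 ≤ p.2 ∧ p.2 ≤ T) → ∀ x : V,
        HasFDerivAt (fun z => X z p.1 p.2) (D p.1 p.2 x) x) ∧
      ContinuousOn (fun q : (ℝ × ℝ) × V => D q.1.1 q.1.2 q.2)
        ({p : ℝ × ℝ | 0 ≤ p.1 ∧ p.1 ≤ p.2 ∧ p.2 ≤ T} ×ˢ Set.univ) ∧
      ∀ (x y : V) (p : ℝ × ℝ), (0 ≤ p.1 ∧ p.1 ≤ p.2 ∧ p.2 ≤ T) →
        D p.1 p.2 x y = y + ∫ τ in p.1..p.2, f' τ (X x p.1 τ) (D p.1 τ x y) := by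
  have hT0 : (0 : ℝ) ≤ T := hT.le
  -- Freezing the time variable outside `[0, T]` makes `f` and `f'` continuous on `ℝ × V`.
  set F : ℝ → V → V := fun t => f (Set.projIcc 0 T hT0 t) with hFdef
  set F' : ℝ → V → V →L[ℝ] V := fun t => f' (Set.projIcc 0 T hT0 t) with hF'def
  have hproj : Continuous fun p : ℝ × V => ((Set.projIcc 0 T hT0 p.1 : ℝ), p.2) :=
    (continuous_subtype_val.comp (continuous_projIcc.comp continuous_fst)).prodMk continuous_snd
  have hF : Continuous (fun p : ℝ × V => F p.1 p.2) :=
    hf.comp_continuous hproj fun p => ⟨(Set.projIcc 0 T hT0 p.1).2, trivial⟩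
  have hF' : Continuous (fun p : ℝ × V => F' p.1 p.2) :=
    hf'.comp_continuous hproj fun p => ⟨(Set.projIcc 0 T hT0 p.1).2, trivial⟩
  have hFd : ∀ t x, HasFDerivAt (F t) (F' t x) x := fun t x =>
    hdiff _ (Set.projIcc 0 T hT0 t).2 x
  -- `U s x` is the trajectory `X x s` frozen outside `[s, T]`.
  set U : ℝ → V → ℝ → V := fun s x τ => X x s (max s (min T τ)) with hUdef
  have hUX : ∀ s x, ∀ τ ∈ Set.Icc s T, U s x τ = X x s τ := by
    intro s x τ hτ
    simp only [hUdef, min_eq_right hτ.2, max_eq_right hτ.1]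
  have hU : ∀ s ∈ Set.Icc 0 T, ∀ x, IsTraj F T s x (U s x) := by
    intro s hs x
    refine ⟨?_, ?_, ?_⟩
    · have hc : Continuous fun τ : ℝ => (s, max s (min T τ)) := by fun_prop
      exact (hXcont x).comp_continuous hc fun τ =>
        ⟨hs.1, le_max_left _ _, max_le hs.2 (min_le_left _ _)⟩
    · intro τ hτ
      have h := hXeq x (s, s) ⟨hs.1, le_rfl, hs.2⟩
      simp only [intervalIntegral.integral_same, add_zero] at h
      simp only [hUdef, max_eq_left ((min_le_right T τ).trans hτ), h]
    · intro τ hτ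
      rw [hUX s x τ hτ, hXeq x (s, τ) ⟨hs.1, hτ.1, hτ.2⟩]
      congr 1
      refine intervalIntegral.integral_congr fun σ hσ => ?_
      rw [Set.uIcc_of_le hτ.1] at hσ
      have hσ' : σ ∈ Set.Icc s T := ⟨hσ.1, hσ.2.trans hτ.2⟩
      simp only [hFdef, hUX s x σ hσ', Set.projIcc_of_mem hT0 ⟨hs.1.trans hσ'.1, hσ'.2⟩]
  have hAc : ∀ s ∈ Set.Icc 0 T, ∀ x, Continuous fun σ => F' σ (U s x σ) := fun s hs x =>
    hF'.comp (continuous_id.prodMk (hU s hs x).cont)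
  have hex : ∀ s x, ∃ Δ : ℝ → V →L[ℝ] V, s ∈ Set.Icc 0 T → Continuous Δ ∧
      ∀ τ ∈ Set.Icc 0 T, Δ τ = 1 + ∫ σ in s..τ, F' σ (U s x σ) * Δ σ := by
    intro s x
    by_cases hs : s ∈ Set.Icc 0 T
    · obtain ⟨Δ, h⟩ := exists_linear_solution (hAc s hs x) hs
      exact ⟨Δ, fun _ => h⟩
    · exact ⟨0, fun h => absurd h hs⟩
  choose Δ hΔ using hex
  refine ⟨fun s t x => Δ s x t, ?_, ?_, ?_⟩
  · rintro ⟨s, t⟩ ⟨h1, h2, h3⟩ x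
    have hs : s ∈ Set.Icc 0 T := ⟨h1, h2.trans h3⟩
    have ht : t ∈ Set.Icc s T := ⟨h2, h3⟩
    have h := traj_hasFDerivAt hF hFd hF' hs (fun z => hU s hs z)
      (hΔ s x hs).1 (hΔ s x hs).2 ht
    simpa only [hUX s _ t ht] using h
  · rw [Metric.continuousOn_iff]
    rintro ⟨⟨s₀, t₀⟩, x₀⟩ ⟨⟨h1, h2, h3⟩, -⟩ η hη
    have hs₀ : s₀ ∈ Set.Icc 0 T := ⟨h1, h2.trans h3⟩
    obtain ⟨κ, hκ, hclose⟩ := linear_solution_close (hAc s₀ hs₀ x₀) (hΔ s₀ x₀ hs₀).1 hs₀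
      (hΔ s₀ x₀ hs₀).2 (half_pos hη)
    obtain ⟨ε, hε, htube⟩ := exists_uniform_tube hF' (hU s₀ hs₀ x₀).cont T hκ
    obtain ⟨L, hL, δ₀, hδ₀, hlip⟩ := traj_lipschitz hF hFd hF' hs₀ (hU s₀ hs₀ x₀)
    obtain ⟨δ₁, hδ₁, hcont⟩ := Metric.continuous_iff.1 (hΔ s₀ x₀ hs₀).1 t₀ (η / 2) (half_pos hη)
    set d := min κ (min δ₀ (ε / L)) with hd
    have hd0 : 0 < d := by positivity
    have hdε : L * d ≤ ε := by
      have : d ≤ ε / L := (min_le_right _ _).trans (min_le_right _ _)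
      rw [le_div_iff₀ hL] at this
      linarith
    refine ⟨min d δ₁, by positivity, ?_⟩
    rintro ⟨⟨s, t⟩, x⟩ ⟨⟨g1, g2, g3⟩, -⟩ hdist
    have hs : s ∈ Set.Icc 0 T := ⟨g1, g2.trans g3⟩
    rw [lt_min_iff] at hdist
    simp only [Prod.dist_eq, max_lt_iff] at hdist
    obtain ⟨⟨⟨hsd, -⟩, hxd⟩, ⟨-, htd⟩, -⟩ := hdist
    rw [Real.dist_eq] at hsd
    rw [dist_eq_norm] at hxd
    have hA : ∀ τ ∈ Set.Icc s T, ‖F' τ (U s x τ) - F' τ (U s₀ x₀ τ)‖ ≤ κ := fun τ hτ =>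
      htube τ ⟨hs.1.trans hτ.1, hτ.2⟩ _
        ((hlip s hs x _ (hU s hs x) d hd0 ((min_le_right _ _).trans (min_le_left _ _))
          hxd.le hsd.le τ hτ).trans hdε)
    have hD := hclose s hs _ _ (hAc s hs x) (hΔ s x hs).1 (hΔ s x hs).2
      (hsd.le.trans (min_le_left _ _)) hA t ⟨g2, g3⟩
    rw [← dist_eq_norm] at hD
    calc dist (Δ s x t) (Δ s₀ x₀ t₀)
        ≤ dist (Δ s x t) (Δ s₀ x₀ t) + dist (Δ s₀ x₀ t) (Δ s₀ x₀ t₀) := dist_triangle _ _ _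
      _ < η := by linarith [hcont t htd]
  · rintro x y ⟨s, t⟩ ⟨h1, h2, h3⟩
    have hs : s ∈ Set.Icc 0 T := ⟨h1, h2.trans h3⟩
    have hint : IntervalIntegrable (fun σ => F' σ (U s x σ) * Δ s x σ) volume s t :=
      ((hAc s hs x).mul (hΔ s x hs).1).intervalIntegrable _ _
    change Δ s x t y = y + ∫ τ in s..t, f' τ (X x s τ) (Δ s x τ y)
    rw [(hΔ s x hs).2 t ⟨h1.trans h2, h3⟩, add_apply, one_apply_eq_self,
      ContinuousLinearMap.intervalIntegral_apply
        (φ := fun σ => F' σ (U s x σ) * Δ s x σ) hint]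
    congr 1
    refine intervalIntegral.integral_congr fun σ hσ => ?_
    rw [Set.uIcc_of_le h2] at hσ
    have hσ' : σ ∈ Set.Icc s T := ⟨hσ.1, hσ.2.trans h3⟩
    simp only [hF'def, hUX s x σ hσ', Set.projIcc_of_mem hT0 ⟨hs.1.trans hσ'.1, hσ'.2⟩,
      mul_apply_eq]
end

section
/- Let V be a nontrivial real Banach space, T ∈ (0,∞), f ∈ C^{0,1}([0,T] × V, V), and for every x ∈ V, s ∈ [0,T] let X^x_{s,·} : [s,T] → V be a continuous solution of X^x_{s,t} = x + ∫_s^t f(τ, X^x_{s,τ}) dτ. Then for all x ∈ V, t ∈ (0,T], s ∈ [0,t], the map u ↦ X^x_{u,t} is continuously differentiable on [0,t] and its derivative satisfies (∂/∂s) X^x_{s,t} = − (∂/∂x X^x_{s,t}) f(s,x); moreover for all s ∈ [0,T), t ∈ [s,T], the map t ↦ X^x_{s,t} is continuously differentiable with (∂/∂t) X^x_{s,t} = f(t, X^x_{s,t}). -/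
/-!
The theorem rests on a single perturbation estimate for solutions of `y' = F(t, y)`, where `F` is
continuous in `(t, y)` and differentiable in `y` with jointly continuous derivative `F'`.

Let `Y` be a solution on `[a, b]`. Its graph is compact, so `F'` is bounded along `Y` and uniformly
close to its values along `Y` on a thin tube around `Y` (`exists_tube`); no local compactness of the
Banach space is needed. A solution `Z` starting at some time `c ∈ [a, b]` close to `Y c` is kept in
the tube by an exponential barrier, and Grönwall's inequality then shows that `Z - Y` differs from a
solution `w` of the linearised equation `w' = F'(t, Y) w` by at most a constant times
`‖Z c - Y c - w c‖ + ε ‖Z c - Y c‖` (`exists_variation_bound`). The constant does not depend on `c`.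

Let `U_s` be the operator solution of `U' = F'(t, Y) U`, `U(s) = 1`, along the solution `Y`
starting from `x` at time `s`; it exists globally by the contraction principle in a weighted norm
(`exists_linear_solution`).

* Taking `c = s` and `w = U_s (z - x)` gives `∂/∂x X^x_{s,t} = U_s(t)`.
* For the derivative in the initial time, both `X^x_{u,·}` and `X^x_{s,·}` are defined from
  `c = max u s` on. Since they leave `x` with velocity approximately `F(s, x)`, their
  difference at time `c` is `-(u - s) F(s, x) + o(u - s)`, whichever of `u` and `s` is larger
  (`eventually_norm_sub_add_smul_le`). The choice `w = -(u - s) U_s F(s, x)` gives the derivative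
  `-U_s(t) F(s, x)`.
* Comparing the equations of `U_u` and `U_s` on `[max u s, t]` shows that `u ↦ U_u(t)` is
  continuous, hence so is the derivative in the initial time.

The derivative in the final time is the fundamental theorem of calculus.
-/

open Set Filter Topology

/-! ### Linear equations and Grönwall's inequality -/

/-- A linear equation `U' = A U`, `U a = 1` in a Banach algebra has a solution on all of `[a, b]`.
The solution is sought as `U t = exp (2 L (t - a)) • z t` with `L` a bound for `A`: for the unknown
`z` the integral equation is a fixed point problem for a `1/2`-contraction of `C([a, b], R)`. -/
theorem exists_linear_solution_s18 {R : Type*} [NormedRing R] [NormedAlgebra ℝ R] [CompleteSpace R]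
    {a b : ℝ} (hab : a ≤ b) {A : ℝ → R} (hA : ContinuousOn A (Icc a b)) :
    ∃ U : ℝ → R, U a = 1 ∧ ∀ t ∈ Icc a b, HasDerivWithinAt U (A t * U t) (Icc a b) t := by
  obtain ⟨L, hL0, hL⟩ : ∃ L : ℝ, 0 < L ∧ ∀ t ∈ Icc a b, ‖A t‖ ≤ L := by
    obtain ⟨L, hL⟩ := isCompact_Icc.exists_bound_of_continuousOn hA
    exact ⟨max L 1, by positivity, fun t ht => (hL t ht).trans (le_max_left _ _)⟩
  -- Replace `A` by its extension that is constant outside `[a, b]`.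
  set B : ℝ → R := fun t => A (projIcc a b hab t) with hB
  have hBc : Continuous B :=
    (continuousOn_iff_continuous_domRestrict.1 hA).comp continuous_projIcc
  have hBL : ∀ t, ‖B t‖ ≤ L := fun t => hL _ (projIcc a b hab t).2
  have hBA : ∀ t ∈ Icc a b, B t = A t := fun t ht => by simp [hB, projIcc_of_mem hab ht]
  set φ : ℝ → ℝ := fun t => Real.exp (2 * L * (t - a)) with hφ
  have hφc : Continuous φ := by fun_prop
  have hφ0 : ∀ t, 0 < φ t := fun t => Real.exp_pos _
  let y : C(Icc a b, R) → ℝ → R := fun z t => φ t • z (projIcc a b hab t)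
  have hy : ∀ z, Continuous (y z) := fun z =>
    hφc.smul (z.continuous.comp continuous_projIcc)
  let G : C(Icc a b, R) → ℝ → R := fun z t => ∫ τ in a..t, B τ * y z τ
  have hG : ∀ z t, HasDerivAt (G z) (B t * y z t) t := fun z t =>
    ((hBc.mul (hy z)).integral_hasStrictDerivAt a t).hasDerivAt
  have hGc : ∀ z, Continuous (G z) := fun z =>
    continuous_iff_continuousAt.2 fun t => (hG z t).continuousAt
  let N : C(Icc a b, R) → C(Icc a b, R) := fun z =>
    ⟨fun t => (φ t)⁻¹ • (1 + G z t), by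
      have := hGc z
      have h1 : Continuous fun t => (φ t)⁻¹ := hφc.inv₀ fun t => (hφ0 t).ne'
      exact (h1.smul (continuous_const.add this)).comp continuous_subtype_val⟩
  have hN : ContractingWith (1 / 2) N := by
    refine ⟨by rw [← NNReal.coe_lt_coe]; norm_num, LipschitzWith.of_dist_le_mul fun z w => ?_⟩
    rw [ContinuousMap.dist_le (by positivity)]
    intro t
    have key : ‖G z t - G w t‖ ≤ dist z w / 2 * φ t := by
      refine image_norm_le_of_norm_deriv_right_le_deriv_boundary (a := a) (b := b)
        (f := fun t => G z t - G w t) (B := fun t => dist z w / 2 * φ t)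
        (B' := fun t => dist z w / 2 * (φ t * (2 * L)))
        ((hGc z).sub (hGc w)).continuousOn
        (fun s _ => ((hG z s).sub (hG w s)).hasDerivWithinAt) ?_ (fun s => ?_) (fun s _ => ?_) t.2
      · simp only [G, hφ, intervalIntegral.integral_same, sub_self, norm_zero]
        positivity
      · have h1 : HasDerivAt (fun s : ℝ => 2 * L * (s - a)) (2 * L) s := by
          simpa using ((hasDerivAt_id s).sub_const a).const_mul (2 * L)
        exact h1.exp.const_mul _
      · have h1 : B s * y z s - B s * y w s =
            B s * (φ s • (z (projIcc a b hab s) - w (projIcc a b hab s))) := by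
          rw [← mul_sub, smul_sub]
        rw [h1]
        calc _ ≤ ‖B s‖ * ‖φ s • (z (projIcc a b hab s) - w (projIcc a b hab s))‖ := norm_mul_le _ _
          _ ≤ L * (φ s * dist z w) := by
            rw [norm_smul, Real.norm_of_nonneg (hφ0 s).le, ← dist_eq_norm]
            gcongr
            · exact hBL s
            · exact ContinuousMap.dist_apply_le_dist _
          _ = _ := by ring
    have h2 : dist (N z t) (N w t) = (φ t)⁻¹ * ‖G z t - G w t‖ := by
      simp only [N, ContinuousMap.coe_mk, dist_eq_norm, ← smul_sub, add_sub_add_left_eq_sub,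
        norm_smul, norm_inv, Real.norm_of_nonneg (hφ0 t).le]
    rw [h2]
    have h3 := hφ0 t
    calc _ ≤ (φ t)⁻¹ * (dist z w / 2 * φ t) := by gcongr
      _ = _ := by push_cast; field_simp
  set z := ContractingWith.fixedPoint N hN
  have hz : N z = z := ContractingWith.fixedPoint_isFixedPt hN
  have hyG : ∀ t ∈ Icc a b, y z t = 1 + G z t := fun t ht => by
    have h1 : N z ⟨t, ht⟩ = z ⟨t, ht⟩ := by rw [hz]
    simp only [y, projIcc_of_mem hab ht, ← h1]
    exact smul_inv_smul₀ (hφ0 t).ne' _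
  refine ⟨fun t => 1 + G z t, by simp [G], fun t ht => ?_⟩
  beta_reduce
  rw [← hyG t ht, ← hBA t ht]
  exact ((hG z t).const_add 1).hasDerivWithinAt

/-- Grönwall's inequality with a bound that is linear in `δ` and `ε`, slightly weaker than
`gronwallBound`. -/
theorem norm_le_of_norm_deriv_le {E : Type*} [NormedAddCommGroup E] [NormedSpace ℝ E]
    {g g' : ℝ → E} {δ K ε a b : ℝ} (hK : 0 < K) (hε : 0 ≤ ε)
    (hg : ∀ t ∈ Icc a b, HasDerivWithinAt g (g' t) (Icc a b) t)
    (ha : ‖g a‖ ≤ δ) (bound : ∀ t ∈ Icc a b, ‖g' t‖ ≤ K * ‖g t‖ + ε) :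
    ∀ t ∈ Icc a b, ‖g t‖ ≤ (δ + ε * (t - a)) * Real.exp (K * (t - a)) := by
  intro t ht
  refine (norm_le_gronwallBound_of_norm_deriv_right_le (fun t ht => (hg t ht).continuousWithinAt)
    (fun t ht => (hg t (Ico_subset_Icc_self ht)).mono_of_mem_nhdsWithin
      (Icc_mem_nhdsGE_of_mem ht)) ha
    (fun t ht => bound t (Ico_subset_Icc_self ht)) t ht).trans ?_
  rw [gronwallBound_of_K_ne_0 hK.ne']
  have h1 : Real.exp (K * (t - a)) - 1 ≤ K * (t - a) * Real.exp (K * (t - a)) := by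
    have h2 := Real.add_one_le_exp (-(K * (t - a)))
    have h3 := Real.exp_pos (K * (t - a))
    have h4 : Real.exp (-(K * (t - a))) * Real.exp (K * (t - a)) = 1 := by
      rw [← Real.exp_add]; simp
    nlinarith
  have h5 : ε / K * (Real.exp (K * (t - a)) - 1) ≤
      ε / K * (K * (t - a) * Real.exp (K * (t - a))) := by gcongr
  have h6 : ε / K * (K * (t - a) * Real.exp (K * (t - a))) =
      ε * (t - a) * Real.exp (K * (t - a)) := by field_simp
  linarith

/-- A jointly continuous map is uniformly close to its values on the graph of a continuous curve
over a compact interval, on a whole tube around the graph. -/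
theorem exists_tube {E W : Type*} [NormedAddCommGroup E] [NormedAddCommGroup W]
    {H : ℝ → E → W} (hH : Continuous fun p : ℝ × E => H p.1 p.2) {Y : ℝ → E} {a b : ℝ}
    (hY : ContinuousOn Y (Icc a b)) {ε : ℝ} (hε : 0 < ε) :
    ∃ r > 0, ∀ t ∈ Icc a b, ∀ z, ‖z - Y t‖ ≤ r → ‖H t z - H t (Y t)‖ ≤ ε := by
  have hK : IsCompact ((fun t => (t, Y t)) '' Icc a b) :=
    isCompact_Icc.image_of_continuousOn (continuousOn_id.prodMk hY)
  have h := hK.uniformContinuousAt_of_continuousAt (fun p : ℝ × E => H p.1 p.2)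
    (fun p _ => hH.continuousAt) (Metric.dist_mem_uniformity hε)
  obtain ⟨r, hr, h⟩ := Metric.mem_uniformity_dist.1 h
  refine ⟨r / 2, by positivity, fun t ht z hz => ?_⟩
  have h1 : dist ((t, Y t) : ℝ × E) (t, z) < r := by
    rw [Prod.dist_eq, dist_self, dist_comm, dist_eq_norm, max_eq_right (norm_nonneg _)]
    linarith
  have h2 : dist (H t (Y t)) (H t z) < ε := h h1 ⟨t, ht, rfl⟩
  rw [← dist_eq_norm, dist_comm]
  exact h2.le

/-! ### Perturbation estimates for solutions -/

section Flow

variable {V : Type*} [NormedAddCommGroup V] [NormedSpace ℝ V]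

/-- The difference of a nearby solution `Z` and the reference solution `Y` is of the order of its
initial size `η`, and is approximated by solutions `w` of the linearised equation along `Y`. The
constants `C` and `δ` are uniform in the initial time `c` of `Z`. -/
theorem exists_variation_bound {F : ℝ → V → V} {F' : ℝ → V → V →L[ℝ] V}
    (hd : ∀ t x, HasFDerivAt (F t) (F' t x) x) (hF' : Continuous fun p : ℝ × V => F' p.1 p.2)
    {Y : ℝ → V} {a b : ℝ} (hab : a ≤ b) (hY : IsIntegralCurveOn Y F (Icc a b)) :
    ∃ C > 0, ∀ ε > 0, ∃ δ > 0, ∀ c ∈ Icc a b, ∀ (Z : ℝ → V) (η : ℝ),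
      IsIntegralCurveOn Z F (Icc c b) → 0 < η → η ≤ δ → ‖Z c - Y c‖ ≤ η →
      ∀ t ∈ Icc c b, ‖Z t - Y t‖ ≤ C * η ∧
        ∀ w : ℝ → V, IsIntegralCurveOn w (fun τ v => F' τ (Y τ) v) (Icc c b) →
          ‖Z t - Y t - w t‖ ≤ C * (‖Z c - Y c - w c‖ + ε * η) := by
  obtain ⟨L, hL0, hL⟩ : ∃ L : ℝ, 0 < L ∧ ∀ t ∈ Icc a b, ‖F' t (Y t)‖ ≤ L := by
    obtain ⟨L, hL⟩ := isCompact_Icc.exists_bound_of_continuousOn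
      (hF'.comp_continuousOn (continuousOn_id.prodMk hY.continuousOn))
    exact ⟨max L 1, by positivity, fun t ht => (hL t ht).trans (le_max_left _ _)⟩
  set M := Real.exp ((L + 2) * (b - a)) with hM
  have hM1 : 1 ≤ M := Real.one_le_exp (mul_nonneg (by positivity) (sub_nonneg.2 hab))
  have hba := sub_nonneg.2 hab
  refine ⟨M * (1 + M * (b - a)), by positivity, fun ε hε => ?_⟩
  obtain ⟨r, hr, htube⟩ := exists_tube hF' hY.continuousOn (lt_min hε one_pos)
  -- Linearisation error of the vector field inside the tube of radius `r` around `Y`.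
  have hlin : ∀ t ∈ Icc a b, ∀ z, ‖z - Y t‖ ≤ r →
      ‖F t z - F t (Y t) - F' t (Y t) (z - Y t)‖ ≤ min ε 1 * ‖z - Y t‖ := by
    intro t ht z hz
    refine (convex_closedBall (Y t) r).norm_image_sub_le_of_norm_hasFDerivWithin_le'
      (f := F t) (f' := F' t) (fun y _ => (hd t y).hasFDerivWithinAt) (fun y hy => ?_)
      (Metric.mem_closedBall_self hr.le) (mem_closedBall_iff_norm.2 hz)
    exact htube t ht y (mem_closedBall_iff_norm.1 hy)
  refine ⟨r / M, by positivity, fun c hc Z η hZ hη hηr hZc => ?_⟩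
  have hsub : Icc c b ⊆ Icc a b := Icc_subset_Icc_left hc.1
  have hYc : IsIntegralCurveOn Y F (Icc c b) := hY.mono hsub
  have hηM : M * η ≤ r := by rw [mul_comm]; exact (le_div_iff₀ (by positivity)).1 hηr
  have hexp : ∀ K, 0 ≤ K → K ≤ L + 2 → ∀ t ∈ Icc c b, Real.exp (K * (t - c)) ≤ M := by
    intro K hK0 hK t ht
    refine Real.exp_le_exp.2 ?_
    have h1 : t - c ≤ b - a := by linarith [ht.2, hc.1]
    have h2 : 0 ≤ t - c := by linarith [ht.1]
    gcongr
  -- The barrier `η * exp ((L + 2) (t - c))` stays below `r`, so the difference `Z - Y`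
  -- cannot leave the tube.
  have h1 : ∀ t ∈ Icc c b, ‖Z t - Y t‖ ≤ M * η := by
    intro t ht
    have h2 : ‖Z t - Y t‖ ≤ η * Real.exp ((L + 2) * (t - c)) := by
      refine image_norm_le_of_norm_deriv_right_lt_deriv_boundary (a := c) (b := b)
        (f := fun t => Z t - Y t) (f' := fun t => F t (Z t) - F t (Y t))
        (B := fun t => η * Real.exp ((L + 2) * (t - c)))
        (B' := fun t => η * (Real.exp ((L + 2) * (t - c)) * (L + 2)))
        (hZ.continuousOn.sub hYc.continuousOn)
        (fun s hs => ?_) ?_ (fun s => ?_) (fun s hs hsB => ?_) ht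
      · exact ((hZ s (Ico_subset_Icc_self hs)).sub (hYc s (Ico_subset_Icc_self hs))
          ).mono_of_mem_nhdsWithin (Icc_mem_nhdsGE_of_mem hs)
      · simpa using hZc
      · have h1 : HasDerivAt (fun s : ℝ => (L + 2) * (s - c)) (L + 2) s := by
          simpa using ((hasDerivAt_id s).sub_const c).const_mul (L + 2)
        exact h1.exp.const_mul _
      · have hs' := Ico_subset_Icc_self hs
        beta_reduce at hsB
        have h3 : ‖Z s - Y s‖ ≤ r := by
          rw [hsB, mul_comm]
          refine le_trans ?_ hηM
          have := hexp (L + 2) (by positivity) le_rfl s hs'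
          gcongr
        have h4 := hlin s (hsub hs') _ h3
        have h5 : ‖F' s (Y s) (Z s - Y s)‖ ≤ L * ‖Z s - Y s‖ :=
          (F' s (Y s)).le_of_opNorm_le (hL s (hsub hs')) _
        have h6 : F s (Z s) - F s (Y s) = (F s (Z s) - F s (Y s) - F' s (Y s) (Z s - Y s))
          + F' s (Y s) (Z s - Y s) := by abel
        have h7 : min ε 1 * ‖Z s - Y s‖ ≤ 1 * ‖Z s - Y s‖ := by
          gcongr; exact min_le_right _ _
        have h8 : 0 < ‖Z s - Y s‖ := by rw [hsB]; positivity
        calc _ ≤ _ := by rw [h6]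
          _ ≤ _ := norm_add_le _ _
          _ ≤ 1 * ‖Z s - Y s‖ + L * ‖Z s - Y s‖ := by linarith
          _ < ‖Z s - Y s‖ * (L + 2) := by linarith
          _ = _ := by rw [hsB]; ring
    refine h2.trans ?_
    rw [mul_comm]
    have := hexp (L + 2) (by positivity) le_rfl t ht
    gcongr
  refine fun t ht => ⟨(h1 t ht).trans ?_, fun w hw => ?_⟩
  · gcongr
    nlinarith [mul_nonneg (mul_nonneg (zero_le_one.trans hM1) (zero_le_one.trans hM1)) hba]
  · have h2 := norm_le_of_norm_deriv_le (g := fun t => Z t - Y t - w t)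
      (g' := fun t => F t (Z t) - F t (Y t) - F' t (Y t) (w t)) (δ := ‖Z c - Y c - w c‖)
      (ε := ε * (M * η)) (K := L) (a := c) (b := b) hL0 (by positivity)
      (fun s hs => ((hZ s hs).sub (hYc s hs)).sub (hw s hs)) le_rfl (fun s hs => ?_) t ht
    · refine h2.trans ?_
      have h3 := hexp L hL0.le (by linarith) t ht
      have h4 : t - c ≤ b - a := by linarith [ht.2, hc.1]
      have h5 : 0 ≤ t - c := by linarith [ht.1]
      calc _ ≤ (‖Z c - Y c - w c‖ + ε * (M * η) * (b - a)) * M := by gcongr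
        _ ≤ _ := by
          have h6 : 0 ≤ ‖Z c - Y c - w c‖ * (M * (b - a)) * M := by positivity
          have h7 : 0 ≤ ε * η * M := by positivity
          nlinarith
    · have h3 := hlin s (hsub hs) _ ((h1 s hs).trans hηM)
      have h6 : F s (Z s) - F s (Y s) - F' s (Y s) (w s) =
        F' s (Y s) (Z s - Y s - w s) + (F s (Z s) - F s (Y s) - F' s (Y s) (Z s - Y s)) := by
        rw [map_sub _ (Z s - Y s)]; abel
      have h5 : ‖F' s (Y s) (Z s - Y s - w s)‖ ≤ L * ‖Z s - Y s - w s‖ :=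
        (F' s (Y s)).le_of_opNorm_le (hL s (hsub hs)) _
      rw [h6]
      refine (norm_add_le _ _).trans (add_le_add h5 (h3.trans ?_))
      have := h1 s hs
      gcongr
      exact min_le_left _ _

/-- Solutions starting from `x` at a time close to `s` leave `x` with velocity approximately
`F s x`, uniformly in the solution. -/
theorem exists_short_time_bound {F : ℝ → V → V} (hF : Continuous fun p : ℝ × V => F p.1 p.2)
    (s : ℝ) (x : V) {ε : ℝ} (hε : 0 < ε) :
    ∃ δ > 0, ∀ u v, |u - s| < δ → |v - s| < δ → ∀ Z : ℝ → V, IsIntegralCurveOn Z F (Icc u v) →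
      Z u = x → ∀ τ ∈ Icc u v, ‖Z τ - x - (τ - u) • F s x‖ ≤ ε * (τ - u) := by
  obtain ⟨r, hr, h⟩ := Metric.continuous_iff.1 hF (s, x) ε hε
  have h : ∀ τ z, |τ - s| < r → ‖z - x‖ < r → ‖F τ z - F s x‖ < ε := by
    intro τ z h1 h2
    rw [← dist_eq_norm]
    refine h (τ, z) ?_
    rw [Prod.dist_eq, Real.dist_eq, dist_eq_norm]
    exact max_lt h1 h2
  set P := ‖F s x‖ + ε with hP
  have hP0 : 0 < P := by positivity
  refine ⟨min r (r / (2 * P)), by positivity, fun u v hu hv Z hZ hZu τ hτ => ?_⟩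
  have hτs : ∀ τ ∈ Icc u v, |τ - s| < r := by
    intro τ hτ
    have h1 := abs_lt.1 (hu.trans_le (min_le_left _ _))
    have h2 := abs_lt.1 (hv.trans_le (min_le_left _ _))
    exact abs_lt.2 ⟨by linarith [hτ.1], by linarith [hτ.2]⟩
  have hPr : ∀ τ ∈ Icc u v, P * (τ - u) < r := by
    intro τ hτ
    have h1 := abs_lt.1 (hu.trans_le (min_le_right _ _))
    have h2 := abs_lt.1 (hv.trans_le (min_le_right _ _))
    have h3 : τ - u < 2 * (r / (2 * P)) := by linarith [hτ.2]
    calc _ < P * (2 * (r / (2 * P))) := by gcongr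
      _ = r := by field_simp
  have hder : ∀ τ ∈ Ico u v, HasDerivWithinAt Z (F τ (Z τ)) (Ici τ) τ := fun τ hτ =>
    (hZ τ (Ico_subset_Icc_self hτ)).mono_of_mem_nhdsWithin (Icc_mem_nhdsGE_of_mem hτ)
  -- `P` exceeds the speed of `Z` as long as `Z` stays in the ball of radius `r`, and the choice of
  -- `δ` keeps the barrier `P * (τ - u)` below `r`.
  have h1 : ∀ τ ∈ Icc u v, ‖Z τ - x‖ ≤ P * (τ - u) := by
    intro τ hτ
    refine image_norm_le_of_norm_deriv_right_lt_deriv_boundary (a := u) (b := v)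
      (f := fun τ => Z τ - x) (f' := fun τ => F τ (Z τ))
      (B := fun τ => P * (τ - u)) (B' := fun τ => P) (hZ.continuousOn.sub continuousOn_const)
      (fun τ hτ => (hder τ hτ).sub_const x) (by simp [hZu]) (fun τ => ?_) (fun τ hτ hB => ?_) hτ
    · simpa using ((hasDerivAt_id τ).sub_const u).const_mul P
    · beta_reduce at hB
      have hτ' := Ico_subset_Icc_self hτ
      have h2 := h τ (Z τ) (hτs τ hτ') (hB ▸ hPr τ hτ')
      have h3 := norm_le_norm_add_norm_sub (F s x) (F τ (Z τ))
      rw [norm_sub_rev] at h3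
      linarith
  have h2 := norm_image_sub_le_of_norm_deriv_right_le_segment (a := u) (b := v)
    (f := fun τ => Z τ - x - (τ - u) • F s x) (f' := fun τ => F τ (Z τ) - F s x) (C := ε)
    ((hZ.continuousOn.sub continuousOn_const).sub (by fun_prop)) (fun τ hτ => ?_)
    (fun τ hτ => ?_) τ hτ
  · simpa [hZu] using h2
  · have h3 : HasDerivAt (fun τ : ℝ => (τ - u) • F s x) (F s x) τ := by
      simpa using ((hasDerivAt_id τ).sub_const u).smul_const (F s x)
    exact ((hder τ hτ).sub_const x).sub h3.hasDerivWithinAt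
  · have hτ' := Ico_subset_Icc_self hτ
    exact (h τ (Z τ) (hτs τ hτ') ((h1 τ hτ').trans_lt (hPr τ hτ'))).le

/-! ### Dependence on the initial time and the initial value -/

section Family

variable {F : ℝ → V → V} {F' : ℝ → V → V →L[ℝ] V} {Z : ℝ → ℝ → V} {x : V} {s t : ℝ}

/-- The solutions `Z u` and `Z s` through `x` at times `u` and `s` are compared at the first
time `max u s` at which both are defined. -/
theorem eventually_norm_sub_add_smul_le (hF : Continuous fun p : ℝ × V => F p.1 p.2)
    (hZ : ∀ u ∈ Icc 0 t, IsIntegralCurveOn (Z u) F (Icc u t)) (hZ0 : ∀ u ∈ Icc 0 t, Z u u = x)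
    (hs : s ∈ Icc 0 t) {ε : ℝ} (hε : 0 < ε) :
    ∀ᶠ u in 𝓝[Icc 0 t] s,
      ‖Z u (max u s) - Z s (max u s) + (u - s) • F s x‖ ≤ ε * |u - s| := by
  obtain ⟨δ, hδ, h⟩ := exists_short_time_bound hF s x hε
  filter_upwards [self_mem_nhdsWithin, mem_nhdsWithin_of_mem_nhds (Metric.ball_mem_nhds s hδ)]
    with u hu hus
  rw [Metric.mem_ball, Real.dist_eq] at hus
  have hss : |s - s| < δ := by simpa using hδ
  rcases le_total s u with hsu | hus'
  · rw [max_eq_left hsu, hZ0 u hu, abs_of_nonneg (sub_nonneg.2 hsu)]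
    have h1 := h s u hss hus (Z s) ((hZ s hs).mono (Icc_subset_Icc_right hu.2)) (hZ0 s hs) u
      (right_mem_Icc.2 hsu)
    have h2 : x - Z s u + (u - s) • F s x = -(Z s u - x - (u - s) • F s x) := by abel
    rwa [h2, norm_neg]
  · rw [max_eq_right hus', hZ0 s hs, abs_of_nonpos (sub_nonpos.2 hus'), neg_sub]
    have h1 := h u s hus hss (Z u) ((hZ u hu).mono (Icc_subset_Icc_right hs.2)) (hZ0 u hu) s
      (right_mem_Icc.2 hus')
    convert h1 using 2
    rw [← neg_sub s u, neg_smul]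
    abel

theorem eventually_norm_sub_le (hF : Continuous fun p : ℝ × V => F p.1 p.2)
    (hZ : ∀ u ∈ Icc 0 t, IsIntegralCurveOn (Z u) F (Icc u t)) (hZ0 : ∀ u ∈ Icc 0 t, Z u u = x)
    (hs : s ∈ Icc 0 t) :
    ∀ᶠ u in 𝓝[Icc 0 t] s,
      ‖Z u (max u s) - Z s (max u s)‖ ≤ (‖F s x‖ + 1) * |u - s| := by
  filter_upwards [eventually_norm_sub_add_smul_le hF hZ hZ0 hs one_pos] with u hu
  have h1 := norm_sub_le (Z u (max u s) - Z s (max u s) + (u - s) • F s x) ((u - s) • F s x)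
  rw [add_sub_cancel_right, norm_smul, Real.norm_eq_abs] at h1
  linarith

theorem tendsto_max_right (hs : s ∈ Icc 0 t) :
    Tendsto (fun u => max u s) (𝓝[Icc 0 t] s) (𝓝[Icc s t] s) := by
  refine tendsto_nhdsWithin_iff.2 ⟨?_, ?_⟩
  · have h : Continuous fun u : ℝ => max u s := by fun_prop
    have h1 := h.tendsto s
    rw [max_self] at h1
    exact h1.mono_left nhdsWithin_le_nhds
  · filter_upwards [self_mem_nhdsWithin] with u hu
    exact ⟨le_max_right _ _, max_le hu.2 hs.2⟩

theorem eventually_abs_sub_le (S : Set ℝ) {ε : ℝ} (hε : 0 < ε) :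
    ∀ᶠ u in 𝓝[S] s, |u - s| ≤ ε := by
  filter_upwards [mem_nhdsWithin_of_mem_nhds (Metric.ball_mem_nhds s hε)] with u hu
  exact (Metric.mem_ball.1 hu).le

/-- Derivative with respect to the initial time `u` of the solutions `Z u` with `Z u u = x`, in
terms of the operator solution `U` of the linearised equation along `Z s`. -/
theorem hasDerivWithinAt_initial_time (hd : ∀ t x, HasFDerivAt (F t) (F' t x) x)
    (hF : Continuous fun p : ℝ × V => F p.1 p.2) (hF' : Continuous fun p : ℝ × V => F' p.1 p.2)
    (hZ : ∀ u ∈ Icc 0 t, IsIntegralCurveOn (Z u) F (Icc u t)) (hZ0 : ∀ u ∈ Icc 0 t, Z u u = x)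
    (hs : s ∈ Icc 0 t) {U : ℝ → V →L[ℝ] V} (hU0 : U s = 1)
    (hU : IsIntegralCurveOn U (fun τ B => F' τ (Z s τ) * B) (Icc s t)) :
    HasDerivWithinAt (fun u => Z u t) (-(U t (F s x))) (Icc 0 t) s := by
  obtain ⟨C, hC, hvar⟩ := exists_variation_bound hd hF' hs.2 (hZ s hs)
  rw [hasDerivWithinAt_iff_isLittleO, Asymptotics.isLittleO_iff]
  intro κ hκ
  set P := ‖F s x‖ + 1 with hP
  have hP0 : 0 < P := by positivity
  set ε := κ / (C * (2 + P)) with hε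
  have hε0 : 0 < ε := by positivity
  obtain ⟨δ, hδ, hvar⟩ := hvar ε hε0
  have hUc : ∀ᶠ u in 𝓝[Icc 0 t] s, ‖U (max u s) (F s x) - F s x‖ ≤ ε := by
    have h1 : Tendsto (fun u => U (max u s) (F s x)) (𝓝[Icc 0 t] s) (𝓝 (U s (F s x))) :=
      ((ContinuousLinearMap.apply ℝ V (F s x)).continuous.tendsto _).comp
        ((hU.continuousOn s (left_mem_Icc.2 hs.2)).tendsto.comp (tendsto_max_right hs))
    rw [hU0] at h1
    filter_upwards [Metric.tendsto_nhds.1 h1 ε hε0] with u hu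
    rw [dist_eq_norm] at hu
    exact hu.le
  filter_upwards [self_mem_nhdsWithin, eventually_norm_sub_add_smul_le hF hZ hZ0 hs hε0,
    eventually_norm_sub_le hF hZ hZ0 hs, hUc,
    eventually_abs_sub_le (Icc 0 t) (div_pos hδ hP0)] with u hu h1 h2 h3 h4
  rcases eq_or_ne u s with rfl | hus
  · simp
  have hus0 : 0 < |u - s| := abs_pos.2 (sub_ne_zero.2 hus)
  have hc : max u s ∈ Icc s t := ⟨le_max_right _ _, max_le hu.2 hs.2⟩
  have h5 : P * |u - s| ≤ δ := by
    rw [mul_comm]; exact (le_div_iff₀ hP0).1 h4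
  -- The linearised comparison curve is `w τ = -(u - s) • U τ (F s x)`.
  have h6 := (hvar (max u s) hc (Z u) (P * |u - s|)
    ((hZ u hu).mono (Icc_subset_Icc_left (le_max_left _ _))) (by positivity) h5 h2 t
    (right_mem_Icc.2 hc.2)).2 (fun τ => -((u - s) • U τ (F s x))) (fun τ hτ => by
      have h7 := (((hU τ ⟨hc.1.trans hτ.1, hτ.2⟩).mono (Icc_subset_Icc_left hc.1)).clm_apply
        (hasDerivWithinAt_const τ (Icc (max u s) t) (F s x))).const_smul (u - s) |>.neg
      simp only [map_zero, add_zero] at h7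
      simp only [map_neg, map_smul]
      exact h7)
  have h7 : Z u t - Z s t - (u - s) • -(U t (F s x)) = Z u t - Z s t - -((u - s) • U t (F s x)) := by
    rw [smul_neg]
  rw [h7, Real.norm_eq_abs]
  have h8 : ‖Z u (max u s) - Z s (max u s) - -((u - s) • U (max u s) (F s x))‖
      ≤ ε * |u - s| + |u - s| * ε := by
    have h9 : Z u (max u s) - Z s (max u s) - -((u - s) • U (max u s) (F s x)) =
      (Z u (max u s) - Z s (max u s) + (u - s) • F s x) +
        (u - s) • (U (max u s) (F s x) - F s x) := by
      rw [smul_sub]; abel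
    rw [h9]
    refine (norm_add_le _ _).trans (add_le_add h1 ?_)
    rw [norm_smul, Real.norm_eq_abs]
    gcongr
  calc _ ≤ _ := h6
    _ ≤ C * (ε * |u - s| + |u - s| * ε + ε * (P * |u - s|)) := by gcongr
    _ = (C * (2 + P)) * ε * |u - s| := by ring
    _ = κ * |u - s| := by rw [hε]; field_simp

/-- The derivative of the flow in the initial value is the operator solution `U` of the linearised
equation along the reference solution `X x`. -/
theorem hasFDerivAt_initial_value (hd : ∀ t x, HasFDerivAt (F t) (F' t x) x)
    (hF' : Continuous fun p : ℝ × V => F' p.1 p.2) {X : V → ℝ → V} (hst : s ≤ t)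
    (hX : ∀ z, IsIntegralCurveOn (X z) F (Icc s t)) (hX0 : ∀ z, X z s = z)
    {U : ℝ → V →L[ℝ] V} (hU0 : U s = 1)
    (hU : IsIntegralCurveOn U (fun τ B => F' τ (X x τ) * B) (Icc s t)) :
    HasFDerivAt (fun z => X z t) (U t) x := by
  obtain ⟨C, hC, hvar⟩ := exists_variation_bound hd hF' hst (hX x)
  rw [hasFDerivAt_iff_isLittleO, Asymptotics.isLittleO_iff]
  intro κ hκ
  obtain ⟨δ, hδ, hvar⟩ := hvar (κ / C) (by positivity)
  filter_upwards [Metric.closedBall_mem_nhds x hδ] with z hz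
  rw [mem_closedBall_iff_norm] at hz
  rcases eq_or_ne z x with rfl | hzx
  · simp
  -- With `w = U (z - x)` the initial error `X z s - X x s - w s` vanishes.
  have h1 := (hvar s (left_mem_Icc.2 hst) (X z) ‖z - x‖ (hX z)
    (norm_pos_iff.2 (sub_ne_zero.2 hzx)) hz (by rw [hX0, hX0]) t (right_mem_Icc.2 hst)).2
    (fun τ => U τ (z - x)) (fun τ hτ => by
      simpa using (hU τ hτ).clm_apply (hasDerivWithinAt_const τ (Icc s t) (z - x)))
  refine h1.trans (le_of_eq ?_)
  rw [hX0, hX0, hU0, one_apply_eq_self, sub_self, norm_zero]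
  field_simp
  ring

/-- The case `u ≤ s` of the comparison of `U u` and `U s` at time `max u s`: on the short interval
`[u, s]` the operators `F' τ (Z u τ)` are bounded independently of `u`, so `U u` stays near `1`. -/
theorem eventually_norm_linear_sub_one_le (hF : Continuous fun p : ℝ × V => F p.1 p.2)
    (hF' : Continuous fun p : ℝ × V => F' p.1 p.2)
    (hZ : ∀ u ∈ Icc 0 t, IsIntegralCurveOn (Z u) F (Icc u t)) (hZ0 : ∀ u ∈ Icc 0 t, Z u u = x)
    (hs : s ∈ Icc 0 t) {U : ℝ → ℝ → V →L[ℝ] V} (hU0 : ∀ u ∈ Icc 0 t, U u u = 1)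
    (hU : ∀ u ∈ Icc 0 t, IsIntegralCurveOn (U u) (fun τ B => F' τ (Z u τ) * B) (Icc u t))
    {ε : ℝ} (hε : 0 < ε) :
    ∀ᶠ u in 𝓝[Icc 0 t] s, u ≤ s → ‖U u s - 1‖ ≤ ε := by
  obtain ⟨δ, hδ, h⟩ := exists_short_time_bound hF s x one_pos
  obtain ⟨r, hr, h'⟩ := Metric.continuous_iff.1 hF' (s, x) 1 one_pos
  set P := ‖F s x‖ + 1 with hP
  have hP0 : 0 < P := by positivity
  set K := ‖F' s x‖ + 1 with hK
  have hK0 : 0 < K := by positivity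
  set m := min (min (δ / 2) (r / 2)) (min (r / (2 * P)) (min 1 (ε / (K * Real.exp K)))) with hm
  have hm0 : 0 < m := by positivity
  filter_upwards [self_mem_nhdsWithin, eventually_abs_sub_le (Icc 0 t) hm0] with u hu hus hle
  rw [abs_of_nonpos (sub_nonpos.2 hle), neg_sub] at hus
  simp only [hm, le_min_iff] at hus
  obtain ⟨⟨m1, m2⟩, m3, m4, m5⟩ := hus
  have hsub : Icc u s ⊆ Icc u t := Icc_subset_Icc_right hs.2
  have hA : ∀ τ ∈ Icc u s, ‖F' τ (Z u τ)‖ ≤ K := by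
    intro τ hτ
    have h1 := h u s (by rw [abs_of_nonpos (sub_nonpos.2 hle)]; linarith) (by simpa using hδ)
      (Z u) ((hZ u hu).mono hsub) (hZ0 u hu) τ hτ
    have h2 : ‖Z u τ - x‖ ≤ P * (τ - u) := by
      have h3 := norm_add_le (Z u τ - x - (τ - u) • F s x) ((τ - u) • F s x)
      rw [sub_add_cancel, norm_smul, Real.norm_of_nonneg (sub_nonneg.2 hτ.1)] at h3
      linarith
    have h4 : ‖Z u τ - x‖ < r := by
      calc _ ≤ _ := h2
        _ ≤ P * (r / (2 * P)) := by gcongr; linarith [hτ.2]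
        _ = r / 2 := by field_simp
        _ < r := by linarith
    have h5 : dist (F' τ (Z u τ)) (F' s x) < 1 := by
      refine h' (τ, Z u τ) ?_
      rw [Prod.dist_eq, Real.dist_eq, dist_eq_norm, abs_of_nonpos (sub_nonpos.2 hτ.2)]
      exact max_lt (by linarith [hτ.1]) h4
    rw [dist_eq_norm] at h5
    have h6 := norm_le_norm_add_norm_sub (F' s x) (F' τ (Z u τ))
    rw [norm_sub_rev] at h6
    linarith
  have h1 := norm_le_of_norm_deriv_le (g := fun τ => U u τ - 1)
    (g' := fun τ => F' τ (Z u τ) * U u τ) (a := u) (b := s) (δ := 0) (ε := K) hK0 hK0.le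
    (fun τ hτ => ((hU u hu τ (hsub hτ)).mono hsub).sub_const 1) (by simp [hU0 u hu])
    (fun τ hτ => ?_) s (right_mem_Icc.2 hle)
  · refine h1.trans ?_
    have h2 := sub_nonneg.2 hle
    calc _ ≤ (0 + K * (ε / (K * Real.exp K))) * Real.exp (K * 1) := by gcongr
      _ = ε := by rw [mul_one]; field_simp; simp
  · have h2 : F' τ (Z u τ) * U u τ = F' τ (Z u τ) * (U u τ - 1) + F' τ (Z u τ) := by
      rw [mul_sub, mul_one, sub_add_cancel]
    rw [h2]
    refine (norm_add_le _ _).trans (add_le_add ((norm_mul_le _ _).trans ?_) (hA τ hτ))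
    gcongr
    exact hA τ hτ

/-- The operator solutions `U u` of the linearised equations along `Z u` depend continuously on the
initial time `u` in operator norm. -/
theorem continuousOn_linear_initial_time (hd : ∀ t x, HasFDerivAt (F t) (F' t x) x)
    (hF : Continuous fun p : ℝ × V => F p.1 p.2) (hF' : Continuous fun p : ℝ × V => F' p.1 p.2)
    (hZ : ∀ u ∈ Icc 0 t, IsIntegralCurveOn (Z u) F (Icc u t)) (hZ0 : ∀ u ∈ Icc 0 t, Z u u = x)
    {U : ℝ → ℝ → V →L[ℝ] V} (hU0 : ∀ u ∈ Icc 0 t, U u u = 1)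
    (hU : ∀ u ∈ Icc 0 t, IsIntegralCurveOn (U u) (fun τ B => F' τ (Z u τ) * B) (Icc u t)) :
    ContinuousOn (fun u => U u t) (Icc 0 t) := by
  intro s hs
  have hYc := (hZ s hs).continuousOn
  obtain ⟨L, hL0, hL⟩ : ∃ L : ℝ, 0 < L ∧ ∀ τ ∈ Icc s t, ‖F' τ (Z s τ)‖ ≤ L := by
    obtain ⟨L, hL⟩ := isCompact_Icc.exists_bound_of_continuousOn
      (hF'.comp_continuousOn (continuousOn_id.prodMk hYc))
    exact ⟨max L 1, by positivity, fun t ht => (hL t ht).trans (le_max_left _ _)⟩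
  obtain ⟨M, hM0, hM⟩ : ∃ M : ℝ, 0 < M ∧ ∀ τ ∈ Icc s t, ‖U s τ‖ ≤ M := by
    obtain ⟨M, hM⟩ := isCompact_Icc.exists_bound_of_continuousOn (hU s hs).continuousOn
    exact ⟨max M 1, by positivity, fun t ht => (hM t ht).trans (le_max_left _ _)⟩
  obtain ⟨C, hC, hvar⟩ := exists_variation_bound hd hF' hs.2 (hZ s hs)
  obtain ⟨δ, hδ, hvar⟩ := hvar 1 one_pos
  set P := ‖F s x‖ + 1 with hP
  have hP0 : 0 < P := by positivity
  have ht0 : 0 ≤ t := hs.1.trans hs.2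
  set Q := (1 + M * t) * Real.exp ((L + 1) * t) with hQ
  have hQ0 : 0 < Q := by positivity
  rw [Metric.continuousWithinAt_iff']
  intro κ hκ
  set ε := min 1 (κ / (2 * Q)) with hε
  have hε0 : 0 < ε := by positivity
  obtain ⟨r, hr, htube⟩ := exists_tube hF' hYc hε0
  have hUc : ∀ᶠ u in 𝓝[Icc 0 t] s, ‖U s (max u s) - 1‖ ≤ ε := by
    have h1 : Tendsto (fun u => U s (max u s)) (𝓝[Icc 0 t] s) (𝓝 (U s s)) :=
      ((hU s hs).continuousOn s (left_mem_Icc.2 hs.2)).tendsto.comp (tendsto_max_right hs)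
    rw [hU0 s hs] at h1
    filter_upwards [Metric.tendsto_nhds.1 h1 ε hε0] with u hu
    rw [dist_eq_norm] at hu
    exact hu.le
  filter_upwards [self_mem_nhdsWithin, hUc,
    eventually_norm_linear_sub_one_le hF hF' hZ hZ0 hs hU0 hU hε0,
    eventually_norm_sub_le hF hZ hZ0 hs,
    eventually_abs_sub_le (Icc 0 t) (div_pos hδ hP0),
    eventually_abs_sub_le (Icc 0 t) (div_pos hr (mul_pos hC hP0))] with u hu h1 h2 h3 h4 h5
  rcases eq_or_ne u s with rfl | hus
  · simpa using hκ
  have hus0 : 0 < |u - s| := abs_pos.2 (sub_ne_zero.2 hus)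
  have hc : max u s ∈ Icc s t := ⟨le_max_right _ _, max_le hu.2 hs.2⟩
  have hsubu : Icc (max u s) t ⊆ Icc u t := Icc_subset_Icc_left (le_max_left _ _)
  have hsubs : Icc (max u s) t ⊆ Icc s t := Icc_subset_Icc_left (le_max_right _ _)
  have hEc : ‖U u (max u s) - U s (max u s)‖ ≤ ε := by
    rcases le_total s u with h | h
    · rw [max_eq_left h] at h1 ⊢
      rwa [hU0 u hu, norm_sub_rev]
    · rw [max_eq_right h, hU0 s hs]
      exact h2 h
  -- `Z u` lies in the tube around `Z s`, so the coefficients of the two linear equations are close.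
  have hA : ∀ τ ∈ Icc (max u s) t, ‖F' τ (Z u τ) - F' τ (Z s τ)‖ ≤ ε := by
    intro τ hτ
    refine htube τ (hsubs hτ) _ ?_
    have h6 := (hvar (max u s) hc (Z u) (P * |u - s|) ((hZ u hu).mono hsubu) (by positivity)
      (by rw [mul_comm]; exact (le_div_iff₀ hP0).1 h4) h3 τ hτ).1
    have h7 := (le_div_iff₀ (mul_pos hC hP0)).1 h5
    linarith
  have h6 := norm_le_of_norm_deriv_le (g := fun τ => U u τ - U s τ)
    (g' := fun τ => F' τ (Z u τ) * U u τ - F' τ (Z s τ) * U s τ) (a := max u s) (b := t)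
    (δ := ε) (ε := ε * M) (K := L + 1) (by positivity) (by positivity)
    (fun τ hτ => ((hU u hu τ (hsubu hτ)).mono hsubu).sub ((hU s hs τ (hsubs hτ)).mono hsubs))
    hEc (fun τ hτ => ?_) t (right_mem_Icc.2 hc.2)
  · rw [dist_eq_norm]
    have h7 : t - max u s ≤ t := by linarith [hs.1.trans hc.1]
    have h8 : 0 ≤ t - max u s := sub_nonneg.2 hc.2
    calc _ ≤ _ := h6
      _ ≤ (ε + ε * M * t) * Real.exp ((L + 1) * t) := by gcongr
      _ = Q * ε := by rw [hQ]; ring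
      _ ≤ Q * (κ / (2 * Q)) := by gcongr; exact min_le_right _ _
      _ = κ / 2 := by field_simp
      _ < κ := by linarith
  · have h7 : F' τ (Z u τ) * U u τ - F' τ (Z s τ) * U s τ =
        F' τ (Z u τ) * (U u τ - U s τ) + (F' τ (Z u τ) - F' τ (Z s τ)) * U s τ := by
      rw [mul_sub, sub_mul]; abel
    rw [h7]
    refine (norm_add_le _ _).trans (add_le_add ((norm_mul_le _ _).trans ?_)
      ((norm_mul_le _ _).trans ?_))
    · gcongr
      have h8 := norm_le_norm_add_norm_sub (F' τ (Z s τ)) (F' τ (Z u τ))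
      rw [norm_sub_rev] at h8
      linarith [hL τ (hsubs hτ), hA τ hτ, min_le_left 1 (κ / (2 * Q))]
    · gcongr
      · exact hA τ hτ
      · exact hM τ (hsubs hτ)

end Family

end Flow

theorem flow_differentiable_in_times
    {V : Type*} [NormedAddCommGroup V] [NormedSpace ℝ V] [CompleteSpace V]
    [Nontrivial V] {T : ℝ} (hT : 0 < T)
    (f : ℝ → V → V) (f' : ℝ → V → V →L[ℝ] V)
    (hf : ContinuousOn (fun p : ℝ × V => f p.1 p.2) (Set.Icc 0 T ×ˢ Set.univ))
    (hdiff : ∀ t ∈ Set.Icc (0 : ℝ) T, ∀ x : V, HasFDerivAt (f t) (f' t x) x)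
    (hf' : ContinuousOn (fun p : ℝ × V => f' p.1 p.2) (Set.Icc 0 T ×ˢ Set.univ))
    (X : V → ℝ → ℝ → V)
    (hXcont : ∀ (x : V), ∀ s ∈ Set.Icc (0 : ℝ) T, ContinuousOn (X x s) (Set.Icc s T))
    (hXeq : ∀ (x : V), ∀ s ∈ Set.Icc (0 : ℝ) T, ∀ t ∈ Set.Icc s T,
      X x s t = x + ∫ τ in s..t, f τ (X x s τ)) :
    (∀ (x : V), ∀ t ∈ Set.Ioc (0 : ℝ) T, ∀ s ∈ Set.Icc (0 : ℝ) t,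
      DifferentiableAt ℝ (fun z : V => X z s t) x ∧
      HasDerivWithinAt (fun u => X x u t)
        (-(fderiv ℝ (fun z : V => X z s t) x (f s x))) (Set.Icc 0 t) s ∧
      ContinuousOn (fun u => -(fderiv ℝ (fun z : V => X z u t) x (f u x)))
        (Set.Icc 0 t)) ∧
    (∀ (x : V), ∀ s ∈ Set.Ico (0 : ℝ) T, ∀ t ∈ Set.Icc s T,
      HasDerivWithinAt (fun u => X x s u) (f t (X x s t)) (Set.Icc s T) t ∧
      ContinuousOn (fun u => f u (X x s u)) (Set.Icc s T)) := by
  -- `F`, `F'` extend `f`, `f'` to all times, constantly outside `[0, T]`.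
  set F : ℝ → V → V := fun t => f (projIcc 0 T hT.le t) with hFdef
  set F' : ℝ → V → V →L[ℝ] V := fun t => f' (projIcc 0 T hT.le t) with hF'def
  have hproj : Continuous fun p : ℝ × V => ((projIcc 0 T hT.le p.1 : ℝ), p.2) := by fun_prop
  have hF : Continuous fun p : ℝ × V => F p.1 p.2 :=
    hf.comp_continuous hproj fun p => ⟨(projIcc 0 T hT.le p.1).2, mem_univ _⟩
  have hF' : Continuous fun p : ℝ × V => F' p.1 p.2 :=
    hf'.comp_continuous hproj fun p => ⟨(projIcc 0 T hT.le p.1).2, mem_univ _⟩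
  have hd : ∀ t x, HasFDerivAt (F t) (F' t x) x := fun t x =>
    hdiff _ (projIcc 0 T hT.le t).2 x
  have hFf : ∀ t ∈ Icc 0 T, F t = f t := fun t ht => by simp [hFdef, projIcc_of_mem hT.le ht]
  have hX0 : ∀ x, ∀ s ∈ Icc 0 T, X x s s = x := fun x s hs => by
    simpa using hXeq x s hs s (left_mem_Icc.2 hs.2)
  have hX : ∀ x, ∀ s ∈ Icc 0 T, IsIntegralCurveOn (X x s) F (Icc s T) := by
    intro x s hs t ht
    have h1 := ODE.hasDerivWithinAt_picard_Icc (f := F) (u := univ) (left_mem_Icc.2 hs.2)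
      hF.continuousOn (hXcont x s hs) (fun _ _ => mem_univ _) x ht
    refine h1.congr_of_mem (fun t ht => ?_) ht
    rw [hXeq x s hs t ht, ODE.picard_apply]
    congr 1
    refine intervalIntegral.integral_congr fun τ hτ => ?_
    rw [uIcc_of_le ht.1] at hτ
    simp only [hFf τ ⟨hs.1.trans hτ.1, hτ.2.trans ht.2⟩]
  refine ⟨fun x t ht s hs => ?_, fun x s hs t ht => ?_⟩
  · have hsub : Icc 0 t ⊆ Icc 0 T := Icc_subset_Icc_right ht.2
    have hXt : ∀ z, ∀ u ∈ Icc 0 t, IsIntegralCurveOn (X z u) F (Icc u t) := fun z u hu =>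
      (hX z u (hsub hu)).mono (Icc_subset_Icc_right ht.2)
    have hZ0 : ∀ u ∈ Icc 0 t, X x u u = x := fun u hu => hX0 x u (hsub hu)
    have hex : ∀ u, ∃ U : ℝ → V →L[ℝ] V, u ∈ Icc 0 t → U u = 1 ∧
        IsIntegralCurveOn U (fun τ B => F' τ (X x u τ) * B) (Icc u t) := by
      intro u
      by_cases hu : u ∈ Icc 0 t
      · obtain ⟨U, hU⟩ := exists_linear_solution_s18 hu.2
          (hF'.comp_continuousOn (continuousOn_id.prodMk (hXt x u hu).continuousOn))
        exact ⟨U, fun _ => hU⟩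
      · exact ⟨0, fun h => absurd h hu⟩
    choose U hU using hex
    have hfd : ∀ u ∈ Icc 0 t, HasFDerivAt (fun z => X z u t) (U u t) x := fun u hu =>
      hasFDerivAt_initial_value hd hF' hu.2 (fun z => hXt z u hu)
        (fun z => hX0 z u (hsub hu)) (hU u hu).1 (hU u hu).2
    refine ⟨(hfd s hs).differentiableAt, ?_, ?_⟩
    · rw [(hfd s hs).fderiv, ← hFf s (hsub hs)]
      exact hasDerivWithinAt_initial_time hd hF hF' (hXt x) hZ0 hs (hU s hs).1 (hU s hs).2
    · have h1 := continuousOn_linear_initial_time hd hF hF' (hXt x) hZ0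
        (fun u hu => (hU u hu).1) (fun u hu => (hU u hu).2)
      have h2 : ContinuousOn (fun u => F u x) (Icc 0 t) :=
        (hF.comp (continuous_id.prodMk continuous_const)).continuousOn
      refine (h1.clm_apply h2).neg.congr fun u hu => ?_
      rw [(hfd u hu).fderiv, ← hFf u (hsub hu)]
      rfl
  · have hs' : s ∈ Icc 0 T := Ico_subset_Icc_self hs
    have hsub : Icc s T ⊆ Icc 0 T := Icc_subset_Icc_left hs.1
    refine ⟨?_, ?_⟩
    · rw [← hFf t (hsub ht)]
      exact hX x s hs' t ht
    · refine (hF.comp_continuousOn (continuousOn_id.prodMk (hXcont x s hs'))).congr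
        fun u hu => ?_
      simp only [Function.comp_apply, id_eq, hFf u (hsub hu)]
end

section
/- Alekseev–Gröbner formula in Banach spaces: Let V be a nontrivial real Banach space, T ∈ (0,∞), f : [0,T] × V → V continuous, Fréchet differentiable in x with jointly continuous derivative ∂f/∂x. For every x ∈ V, s ∈ [0,T] let X^x_{s,·} : [s,T] → V be a continuous solution of X^x_{s,t} = x + ∫_s^t f(τ, X^x_{s,τ}) dτ. Let Y, E : [0,T] → V be strongly measurable with ∫_0^T (‖f(τ, Y_τ)‖ + ‖E_τ‖) dτ < ∞ and Y_t = Y_0 + ∫_0^t (f(τ, Y_τ) + E_τ) dτ for all t ∈ [0,T]. Then: (i) for all s ≤ t the map x ↦ X^x_{s,t} is Fréchet differentiable; (ii) for each t, τ ↦ (∂/∂x X^{Y_τ}_{τ,t}) E_τ is strongly measurable on [0,t]; (iii) ∫_0^t ‖(∂/∂x X^{Y_τ}_{τ,t}) E_τ‖ dτ < ∞; and (iv) for all 0 ≤ s ≤ t ≤ T, Y_t = X^{Y_s}_{s,t} + ∫_s^t (∂/∂x X^{Y_τ}_{τ,t}) E_τ dτ. -/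
/-!
The formula is proved by linearizing the flow, uniformly in the starting time, along a single
reference trajectory.

Fix `0 ≤ s ≤ b ≤ T` and `x`, and let `Z` be the trajectory `X x s` on `[s, b]`, kept equal to `x`
before time `s`. Let `W` solve the adjoint linear equation `W' = -W · f'(t, Z t)` with `W b = 1`
(`exists_adjoint`). For two solutions `u`, `v` that stay near `Z`,
`d/dt [W (u - v)] = W (f(t, u) - f(t, v) - f'(t, Z) (u - v))`, which is at most a small multiple of
`‖u - v‖`. Integrating from the common starting time `a` up to `b` gives
`‖X y a b - X z a b - W a (y - z)‖ ≤ ε ‖y - z‖` for all `(a, y, z)` close to `(s, x, x)`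
(`IsFlow.exists_linearization`). That solutions started near `(s, x)`, earlier or later than `s`,
do stay near `Z` is a Grönwall bootstrap, `f` being Lipschitz near the compact curve `Z`
(`dist_le_of_tube`, `IsFlow.eventually_close`). Since the estimate is uniform in `a`, `y` and `z`,
it yields the derivative of `x ↦ X x s b`, and also its joint continuity in `(s, x)`
(`IsFlow.continuousOn_fderiv`); measurability and integrability of the integrand follow.

Write `D τ` for the derivative of `z ↦ X z τ t` at `Y τ`, and let
`G τ = X (Y τ) τ t - ∫ r in s..τ, D r (E r)`. By the semigroup property,
`X (Y τ) τ t = X (u c) c t` where `u` is the unperturbed trajectory from `(τ, Y τ)`, and `Y c - u c`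
equals `∫ r in τ..c, E r` up to `o(c - τ)`. The linearization then gives
`‖G c - G τ‖ ≤ ε ∫ r in τ..c, (1 + ‖E r‖)` for `c > τ` close to `τ`
(`IsFlow.eventually_increment_le`). This local bound needs no continuity of `E`, and is additive
over adjacent intervals, so it propagates to `‖G t - G s‖ ≤ ε ∫ r in s..t, (1 + ‖E r‖)` by
continuous induction. Letting `ε → 0`, `G t = G s`, which is the formula
(`IsFlow.perturbation_formula`).
-/

open MeasureTheory

namespace AlekseevGroebner

open Set Filter Metric
open scoped NNReal Topology

variable {V : Type*} [NormedAddCommGroup V] [NormedSpace ℝ V]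

/-! ### Solutions and Grönwall estimates near a curve -/

/-- `u` solves `u' = f(t, u)` on `[a, b]`. The equation is imposed through right derivatives on
`[a, b)`, the form in which Mathlib's Grönwall inequalities take it. -/
structure IsSol (f : ℝ → V → V) (u : ℝ → V) (a b : ℝ) : Prop where
  cont : ContinuousOn u (Icc a b)
  deriv : ∀ t ∈ Ico a b, HasDerivWithinAt u (f t (u t)) (Ici t) t

lemma IsSol.mono {f : ℝ → V → V} {u : ℝ → V} {a b c d : ℝ} (h : IsSol f u a b)
    (hc : a ≤ c) (hd : d ≤ b) : IsSol f u c d :=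
  ⟨h.cont.mono (Icc_subset_Icc hc hd), fun t ht => h.deriv t (Ico_subset_Ico hc hd ht)⟩

/-- A continuous solution of the integral equation on `[a, b]` is a solution in the sense of
`IsSol`. -/
lemma isSol_of_integral [CompleteSpace V] {f : ℝ → V → V}
    (hf : Continuous fun p : ℝ × V => f p.1 p.2)
    {u : ℝ → V} {x : V} {a b : ℝ} (hu : ContinuousOn u (Icc a b))
    (heq : ∀ t ∈ Icc a b, u t = x + ∫ τ in a..t, f τ (u τ)) : IsSol f u a b := by
  refine ⟨hu, fun t ht => ?_⟩
  have hab : a ≤ b := ht.1.trans ht.2.le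
  -- outside `[a, b]` nothing is known about `u`, so it is extended by its boundary values
  have hg : Continuous fun τ => f τ (u (projIcc a b hab τ)) :=
    hf.comp (continuous_id.prodMk (hu.comp_continuous
      (continuous_subtype_val.comp continuous_projIcc) fun τ => (projIcc a b hab τ).2))
  have hproj : ∀ τ ∈ Icc a b, ((projIcc a b hab τ : Icc a b) : ℝ) = τ := fun τ hτ => by
    rw [projIcc_of_mem hab hτ]
  have h1 : HasDerivAt (fun t => x + ∫ τ in a..t, f τ (u (projIcc a b hab τ)))
      (f t (u (projIcc a b hab t))) t :=
    (intervalIntegral.integral_hasDerivAt_right (hg.intervalIntegrable _ _)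
      (hg.stronglyMeasurableAtFilter _ _) hg.continuousAt).const_add x
  rw [hproj t ⟨ht.1, ht.2.le⟩] at h1
  have h2 : ∀ r ∈ Icc a b, u r = x + ∫ τ in a..r, f τ (u (projIcc a b hab τ)) := by
    intro r hr
    rw [heq r hr]
    congr 1
    refine intervalIntegral.integral_congr fun τ hτ => ?_
    rw [uIcc_of_le hr.1] at hτ
    simp only [hproj τ ⟨hτ.1, hτ.2.trans hr.2⟩]
  refine h1.hasDerivWithinAt.congr_of_eventuallyEq ?_ (h2 t ⟨ht.1, ht.2.le⟩)
  filter_upwards [Icc_mem_nhdsGE ht.2] with r hr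
  exact h2 r ⟨ht.1.trans hr.1, hr.2⟩

/-- Grönwall estimate with only local Lipschitz control: `f` is Lipschitz on the `ρ`-tube around an
approximate solution `g` (of defect at most `η`). If the Grönwall bound is below `ρ`, then the
solution `u` is not assumed to stay in the tube but is shown to do so, and the bound holds. -/
lemma dist_le_of_tube {f : ℝ → V → V} {u g g' : ℝ → V} {a b ρ η : ℝ} {K : ℝ≥0} (hab : a ≤ b)
    (hη : 0 ≤ η) (hLip : ∀ t ∈ Icc a b, LipschitzOnWith K (f t) (closedBall (g t) ρ))
    (hu : IsSol f u a b) (hg : ContinuousOn g (Icc a b))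
    (hg' : ∀ t ∈ Ico a b, HasDerivWithinAt g (g' t) (Ici t) t)
    (hdef : ∀ t ∈ Ico a b, dist (g' t) (f t (g t)) ≤ η)
    (hsmall : gronwallBound (dist (u a) (g a)) K η (b - a) < ρ) :
    ∀ t ∈ Icc a b, dist (u t) (g t) ≤ gronwallBound (dist (u a) (g a)) K η (b - a) := by
  have hmono := gronwallBound_mono (δ := dist (u a) (g a)) dist_nonneg hη K.coe_nonneg
  have hρ : 0 ≤ ρ := by
    have := hmono (sub_nonneg.2 hab)
    rw [gronwallBound_x0] at this
    exact dist_nonneg.trans (this.trans hsmall.le)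
  -- as long as `u` has stayed in the tube, the bound holds, and it puts `u` strictly inside the
  -- tube; hence the set of such times is closed and open to the right
  have step : ∀ c ∈ Icc a b, (∀ r ∈ Ico a c, dist (u r) (g r) ≤ ρ) →
      dist (u c) (g c) ≤ gronwallBound (dist (u a) (g a)) K η (b - a) := by
    intro c hc hr
    have hu' := hu.mono le_rfl hc.2
    have := dist_le_of_approx_trajectories_ODE_of_mem (v := f)
      (s := fun t => closedBall (g t) ρ) (K := K) (f := u) (g := g) (a := a) (b := c) (εf := 0)
      (εg := η) (fun t ht => hLip t ⟨ht.1, ht.2.le.trans hc.2⟩) hu'.cont hu'.deriv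
      (fun t _ => by simp) (fun t ht => mem_closedBall.2 (hr t ht))
      (hg.mono (Icc_subset_Icc le_rfl hc.2)) (fun t ht => hg' t ⟨ht.1, ht.2.trans_le hc.2⟩)
      (fun t ht => hdef t ⟨ht.1, ht.2.trans_le hc.2⟩)
      (fun t _ => mem_closedBall_self hρ) le_rfl c ⟨hc.1, le_rfl⟩
    rw [zero_add] at this
    exact this.trans (hmono (by linarith [hc.2]))
  have hcont : ContinuousOn (fun t => dist (u t) (g t)) (Icc a b) :=
    continuous_dist.comp_continuousOn (hu.cont.prodMk hg)
  have hall : Icc a b ⊆ {t | dist (u t) (g t) ≤ ρ} := by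
    refine IsClosed.Icc_subset_of_forall_mem_nhdsGT_of_Icc_subset ?_ ?_ ?_
    · have := hcont.preimage_isClosed_of_isClosed isClosed_Icc (isClosed_Iic (a := ρ))
      rwa [inter_comm] at this
    · exact (step a ⟨le_rfl, hab⟩ (by simp)).trans hsmall.le
    · intro t ht hsub
      have h1 := (step t ⟨ht.1, ht.2.le⟩ fun r hr => hsub ⟨hr.1, hr.2.le⟩).trans_lt hsmall
      have h2 := (hcont t ⟨ht.1, ht.2.le⟩).eventually (gt_mem_nhds h1)
      have h3 : 𝓝[>] t ≤ 𝓝[Icc a b] t := by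
        rw [← nhdsWithin_Ioc_eq_nhdsGT ht.2]
        exact nhdsWithin_mono _ fun r hr => ⟨ht.1.trans hr.1.le, hr.2⟩
      filter_upwards [h3 h2] with r hr using le_of_lt hr
  exact fun t ht => step t ht fun r hr => hall ⟨hr.1, hr.2.le.trans ht.2⟩

/-- Continuity of `f'` at the points of the compact set `{(t, Z t) | t ∈ [0, T]}` gives a tube
around `Z` of uniform radius, although `V` need not be locally compact. -/
lemma exists_tube {f' : ℝ → V → V →L[ℝ] V} (hf' : Continuous fun p : ℝ × V => f' p.1 p.2)
    {Z : ℝ → V} (hZ : Continuous Z) (T : ℝ) {ε : ℝ} (hε : 0 < ε) :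
    ∃ ρ > 0, ∀ t ∈ Icc 0 T, ∀ y ∈ closedBall (Z t) ρ, ‖f' t y - f' t (Z t)‖ ≤ ε := by
  have h := isCompact_Icc (a := (0 : ℝ)) (b := T) |>.eventually_forall_of_forall_eventually
    (x₀ := (0 : V)) (P := fun h t => ‖f' t (Z t + h) - f' t (Z t)‖ ≤ ε) fun t _ => by
      have hc : Continuous fun q : V × ℝ => ‖f' q.2 (Z q.2 + q.1) - f' q.2 (Z q.2)‖ :=
        ((hf'.comp (continuous_snd.prodMk ((hZ.comp continuous_snd).add continuous_fst))).sub
          (hf'.comp (continuous_snd.prodMk (hZ.comp continuous_snd)))).norm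
      have := hc.tendsto ((0 : V), t)
      simp only [add_zero, sub_self, norm_zero] at this
      exact (this.eventually (gt_mem_nhds hε)).mono fun q hq => hq.le
  obtain ⟨ρ, hρ, H⟩ := nhds_basis_closedBall.eventually_iff.1 h
  refine ⟨ρ, hρ, fun t ht y hy => ?_⟩
  have := H (x := y - Z t) (by simpa [dist_eq_norm] using hy) t ht
  simpa using this

/-- A vector field with continuous derivative is uniformly Lipschitz on some tube around a
continuous curve, by the mean value inequality. The constant is taken positive so that the
nondegenerate form of `gronwallBound` applies. -/
lemma exists_lipschitz_tube {f : ℝ → V → V} {f' : ℝ → V → V →L[ℝ] V}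
    (hdiff : ∀ t x, HasFDerivAt (f t) (f' t x) x)
    (hf' : Continuous fun p : ℝ × V => f' p.1 p.2)
    {Z : ℝ → V} (hZ : Continuous Z) (T : ℝ) :
    ∃ ρ > 0, ∃ K : ℝ≥0, 0 < K ∧
      ∀ t ∈ Icc 0 T, LipschitzOnWith K (f t) (closedBall (Z t) ρ) := by
  obtain ⟨ρ, hρ, h⟩ := exists_tube hf' hZ T one_pos
  obtain ⟨C, hC⟩ := (isCompact_Icc (a := (0 : ℝ)) (b := T)).exists_bound_of_continuousOn
    (hf'.comp (continuous_id.prodMk hZ)).continuousOn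
  refine ⟨ρ, hρ, ‖C‖₊ + 1, by positivity, fun t ht => ?_⟩
  refine (convex_closedBall (Z t) ρ).lipschitzOnWith_of_nnnorm_hasFDerivWithin_le
    (fun y _ => (hdiff t y).hasFDerivWithinAt) fun y hy => ?_
  rw [← NNReal.coe_le_coe]
  have h1 := h t ht y hy
  have h2 : ‖f' t (Z t)‖ ≤ C := hC t ht
  have h3 := norm_sub_norm_le (f' t y) (f' t (Z t))
  have h4 := le_abs_self C
  simp only [coe_nnnorm, NNReal.coe_add, NNReal.coe_one, Real.norm_eq_abs]
  linarith

/-- Uniqueness for the initial value problem, forward in time. -/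
lemma IsSol.eqOn [CompleteSpace V] {f : ℝ → V → V} {f' : ℝ → V → V →L[ℝ] V}
    (hdiff : ∀ t x, HasFDerivAt (f t) (f' t x) x)
    (hf' : Continuous fun p : ℝ × V => f' p.1 p.2) {u g : ℝ → V} {a b : ℝ} (ha : 0 ≤ a)
    (hu : IsSol f u a b) (hg : IsSol f g a b) (h : u a = g a) :
    ∀ t ∈ Icc a b, u t = g t := by
  intro t ht
  have hab : a ≤ b := ht.1.trans ht.2
  obtain ⟨ρ, hρ, K, -, hK⟩ := exists_lipschitz_tube hdiff hf'
    (Z := fun τ => g (projIcc a b hab τ)) (hg.cont.comp_continuous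
      (continuous_subtype_val.comp continuous_projIcc) fun τ => (projIcc a b hab τ).2) b
  have := dist_le_of_tube (ρ := ρ) (K := K) (η := 0) hab le_rfl (fun r hr => by
    simpa only [projIcc_of_mem hab hr] using hK r ⟨ha.trans hr.1, hr.2⟩) hu hg.cont hg.deriv
    (by simp) (by simpa [h, gronwallBound_ε0_δ0] using hρ) t ht
  rw [h, dist_self, gronwallBound_ε0_δ0] at this
  exact dist_le_zero.1 this

/-! ### The adjoint linear equation -/

/-- Solvability of the linear equation `W' = -W A`, `W b = 1` in the Banach algebra of bounded
operators, on the whole line. The solution is the Picard series `∑ n, w n` with `w 0 = 1` and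
`w (n + 1) t = -∫ r in b..t, w n r * A r`, whose terms are bounded by `(K |t - b|) ^ n / n!` where
`‖A‖ ≤ K`. -/
lemma exists_adjoint [CompleteSpace V] {A : ℝ → V →L[ℝ] V} (hA : Continuous A) (b : ℝ) :
    ∃ W : ℝ → V →L[ℝ] V, W b = 1 ∧ ∀ t, HasDerivAt W (-(W t * A t)) t := by
  let w : ℕ → ℝ → V →L[ℝ] V := fun n => Nat.rec (fun _ => 1)
    (fun _ g t => ∫ r in b..t, -(g r * A r)) n
  have w0 : ∀ t, w 0 t = 1 := fun t => rfl
  have wS : ∀ n t, w (n + 1) t = ∫ r in b..t, -(w n r * A r) := fun n t => rfl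
  have hderiv : ∀ n, Continuous (w n) →
      ∀ t, HasDerivAt (w (n + 1)) (-(w n t * A t)) t := by
    intro n hn t
    have hc : Continuous fun r => -(w n r * A r) := (hn.mul hA).neg
    exact intervalIntegral.integral_hasDerivAt_right (hc.intervalIntegrable _ _)
      (hc.stronglyMeasurableAtFilter _ _) hc.continuousAt
  have hcont : ∀ n, Continuous (w n) := by
    intro n
    induction n with
    | zero => exact continuous_const
    | succ n ih => exact continuous_iff_continuousAt.2 fun t => (hderiv n ih t).continuousAt
  have hone : ‖(1 : V →L[ℝ] V)‖ ≤ 1 := ContinuousLinearMap.norm_id_le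
  have hbound : ∀ R K : ℝ, 0 ≤ K → (∀ t, |t - b| ≤ R → ‖A t‖ ≤ K) → ∀ n t, |t - b| ≤ R →
      ‖w n t‖ ≤ (K * |t - b|) ^ n / n.factorial := by
    intro R K hK hAK n
    induction n with
    | zero => intro t _; simpa [w0] using hone
    | succ n ih =>
      intro t ht
      rw [wS]
      have hle : ∀ r ∈ uIoc b t, ‖-(w n r * A r)‖ ≤ K ^ (n + 1) / n.factorial * |r - b| ^ n := by
        intro r hr
        have hrb : |r - b| ≤ |t - b| := abs_sub_left_of_mem_uIcc (uIoc_subset_uIcc hr)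
        calc ‖-(w n r * A r)‖ ≤ ‖w n r‖ * ‖A r‖ := by rw [norm_neg]; exact norm_mul_le _ _
          _ ≤ (K * |r - b|) ^ n / n.factorial * K := by
            gcongr
            · exact ih r (hrb.trans ht)
            · exact hAK r (hrb.trans ht)
          _ = _ := by rw [mul_pow]; ring
      calc ‖∫ r in b..t, -(w n r * A r)‖
          ≤ |∫ r in b..t, K ^ (n + 1) / n.factorial * |r - b| ^ n| := by
            refine intervalIntegral.norm_integral_le_abs_of_norm_le
              (ae_restrict_of_forall_mem measurableSet_uIoc hle) ?_
            exact Continuous.intervalIntegrable (by fun_prop) _ _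
        _ = (K * |t - b|) ^ (n + 1) / (n + 1).factorial := by
          rw [intervalIntegral.integral_const_mul, abs_mul,
            intervalIntegral.abs_integral_eq_abs_integral_uIoc, integral_pow_abs_sub_uIoc,
            abs_of_nonneg (by positivity), abs_of_nonneg (by positivity), Nat.factorial_succ]
          push_cast
          rw [mul_pow]
          field_simp
  have hmain : ∀ t, HasDerivAt (fun t => ∑' n, w n t) (-((∑' n, w n t) * A t)) t ∧
      Summable fun n => w n t := by
    intro t
    obtain ⟨K, hK⟩ := (isCompact_closedBall b (|t - b| + 1)).exists_bound_of_continuousOn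
      hA.continuousOn
    set R := |t - b| + 1 with hR
    have hK0 : 0 ≤ K := (norm_nonneg _).trans (hK b (mem_closedBall_self (by positivity)))
    have hb := hbound R K hK0 fun r hr => hK r (by simpa [Real.dist_eq] using hr)
    have hsumE : Summable fun n : ℕ => (K * R) ^ n / n.factorial :=
      Real.summable_pow_div_factorial _
    have hb' : ∀ n r, r ∈ ball b R → ‖w n r‖ ≤ (K * R) ^ n / n.factorial := by
      intro n r hr
      have hr' : |r - b| ≤ R := (by simpa [Real.dist_eq] using hr : |r - b| < R).le
      refine (hb n r hr').trans ?_
      gcongr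
    have htb : t ∈ ball b R := by rw [mem_ball, Real.dist_eq]; linarith
    have hsum : Summable fun n => w n t :=
      Summable.of_norm_bounded hsumE fun n => hb' n t htb
    refine ⟨?_, hsum⟩
    -- termwise differentiation of the tail; the term `w 0 = 1` is constant
    have key := hasDerivAt_tsum_of_isPreconnected (𝕜 := ℝ) (g := fun n => w (n + 1))
      (g' := fun n r => -(w n r * A r)) (u := fun n : ℕ => (K * R) ^ n / n.factorial * K)
      (t := ball b R) (y₀ := t) (y := t)
      (hsumE.mul_right K) isOpen_ball (convex_ball b R).isPreconnected
      (fun n r _ => hderiv n (hcont n) r)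
      (fun n r hr => by
        rw [norm_neg]
        refine (norm_mul_le _ _).trans ?_
        gcongr
        · exact hb' n r hr
        · exact hK r (ball_subset_closedBall hr))
      htb ((summable_nat_add_iff 1).2 hsum) htb
    rw [tsum_neg, hsum.tsum_mul_right] at key
    refine (key.const_add 1).congr_of_eventuallyEq ?_
    filter_upwards [isOpen_ball.mem_nhds htb] with r hr
    rw [(Summable.of_norm_bounded hsumE fun n => hb' n r hr).tsum_eq_zero_add, w0]
  refine ⟨fun t => ∑' n, w n t, ?_, fun t => (hmain t).1⟩
  change ∑' n, w n b = 1
  rw [(hmain b).2.tsum_eq_zero_add, w0]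
  simp [wS]

/-! ### Linearization of the flow -/

/-- `X x s t` is a flow of `u' = f(t, u)` on `[0, T]`: for every `x` and `s ∈ [0, T]` the curve
`X x s` is a solution on `[s, T]` that starts at `x`. The semigroup property is not part of the
definition; it follows from uniqueness when `f` is differentiable with continuous derivative. -/
structure IsFlow (f : ℝ → V → V) (X : V → ℝ → ℝ → V) (T : ℝ) : Prop where
  start : ∀ x, ∀ s ∈ Icc 0 T, X x s s = x
  sol : ∀ x, ∀ s ∈ Icc 0 T, IsSol f (X x s) s T

/-- The trajectory `X x s` on `[s, b]`, frozen at its endpoint values outside: since times are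
clamped to `[s, b]`, it is `X x s s` before `s` and `X x s b` after `b`. For a flow this is a
continuous curve on the whole line, equal to `x` up to time `s`, to which trajectories started
slightly before `s` can be compared as well. -/
def frozen (X : V → ℝ → ℝ → V) (x : V) (s b t : ℝ) : V := X x s (max s (min t b))

section Flow

variable {f : ℝ → V → V} {f' : ℝ → V → V →L[ℝ] V} {X : V → ℝ → ℝ → V} {T : ℝ}

lemma frozen_of_mem {V : Type*} {X : V → ℝ → ℝ → V} {x : V} {s b t : ℝ}
    (ht : t ∈ Icc s b) : frozen X x s b t = X x s t := by
  rw [frozen, min_eq_left ht.2, max_eq_right ht.1]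

lemma IsFlow.frozen_of_le (hX : IsFlow f X T) {x : V} {s b t : ℝ} (hs : s ∈ Icc 0 T)
    (ht : t ≤ s) : frozen X x s b t = x := by
  rw [frozen, max_eq_left ((min_le_left _ _).trans ht), hX.start x s hs]

lemma IsFlow.continuous_frozen (hX : IsFlow f X T) {x : V} {s b : ℝ} (hs : s ∈ Icc 0 b)
    (hb : b ≤ T) : Continuous (frozen X x s b) :=
  (hX.sol x s ⟨hs.1, hs.2.trans hb⟩).cont.comp_continuous (by fun_prop) fun t =>
    ⟨le_max_left _ _, (max_le hs.2 (min_le_right _ _)).trans hb⟩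

lemma IsFlow.semigroup [CompleteSpace V] (hdiff : ∀ t x, HasFDerivAt (f t) (f' t x) x)
    (hf' : Continuous fun p : ℝ × V => f' p.1 p.2) (hX : IsFlow f X T) {x : V} {s r t : ℝ}
    (hs : 0 ≤ s) (hsr : s ≤ r) (hrt : r ≤ t) (ht : t ≤ T) :
    X x s t = X (X x s r) r t := by
  have hr : r ∈ Icc 0 T := ⟨hs.trans hsr, hrt.trans ht⟩
  exact ((hX.sol x s ⟨hs, hsr.trans hr.2⟩).mono hsr le_rfl).eqOn hdiff hf' hr.1
    (hX.sol _ r hr) (hX.start _ r hr).symm t ⟨hrt, ht⟩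

/-- Continuous dependence on the initial data: trajectories started at a time and point near
`(s, x)` stay, up to time `b`, uniformly close to the frozen trajectory through `(s, x)`. -/
lemma IsFlow.eventually_close (hf : Continuous fun p : ℝ × V => f p.1 p.2)
    (hdiff : ∀ t x, HasFDerivAt (f t) (f' t x) x)
    (hf' : Continuous fun p : ℝ × V => f' p.1 p.2) (hX : IsFlow f X T) (x : V) {s b : ℝ}
    (hs : s ∈ Icc 0 b) (hb : b ≤ T) {ρ : ℝ} (hρ : 0 < ρ) :
    ∀ᶠ q : ℝ × V in 𝓝 (s, x), q.1 ∈ Icc 0 b →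
      ∀ t ∈ Icc q.1 b, dist (X q.2 q.1 t) (frozen X x s b t) ≤ ρ := by
  have hsT : s ∈ Icc 0 T := ⟨hs.1, hs.2.trans hb⟩
  have hZ : Continuous (frozen X x s b) := hX.continuous_frozen hs hb
  obtain ⟨ρ₀, hρ₀, K, hK0, hK⟩ := exists_lipschitz_tube hdiff hf' hZ b
  set ρ₁ := min ρ ρ₀ with hρ₁
  have hρ₁0 : 0 < ρ₁ := lt_min hρ hρ₀
  have hK₁ : ∀ t ∈ Icc 0 b, LipschitzOnWith K (f t) (closedBall (frozen X x s b t) ρ₁) :=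
    fun t ht => (hK t ht).mono (closedBall_subset_closedBall (min_le_right _ _))
  -- `δ` is chosen so that a deviation `δ` at some time grows to at most `ρ₁ / 2` by time `b`
  set δ := ρ₁ / 2 * Real.exp (-(K * b)) with hδ
  have hδ0 : 0 < δ := by positivity
  -- from time `s` on, the frozen trajectory is a genuine solution
  have right : ∀ c ∈ Icc s b, ∀ u, IsSol f u c b → dist (u c) (frozen X x s b c) ≤ δ →
      ∀ t ∈ Icc c b, dist (u t) (frozen X x s b t) ≤ ρ := by
    intro c hc u hu hd t ht
    rw [frozen_of_mem hc] at hd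
    have hsol := (hX.sol x s hsT).mono hc.1 hb
    have hlt : gronwallBound (dist (u c) (X x s c)) K 0 (b - c) < ρ₁ := by
      rw [gronwallBound_ε0]
      calc dist (u c) (X x s c) * Real.exp (K * (b - c)) ≤ δ * Real.exp (K * b) := by
            gcongr
            linarith [hs.1, hc.1]
        _ = ρ₁ / 2 := by rw [hδ, mul_assoc, ← Real.exp_add]; simp
        _ < ρ₁ := half_lt_self hρ₁0
    have := dist_le_of_tube hc.2 le_rfl (fun r hr => by
      have := hK₁ r ⟨hs.1.trans (hc.1.trans hr.1), hr.2⟩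
      rwa [frozen_of_mem ⟨hc.1.trans hr.1, hr.2⟩] at this) hu hsol.cont hsol.deriv
      (by simp) hlt t ht
    rw [frozen_of_mem ⟨hc.1.trans ht.1, ht.2⟩]
    exact this.trans (hlt.le.trans (min_le_left _ _))
  -- before time `s` it is the constant `x`, an approximate solution of defect at most `|M|`
  obtain ⟨M, hM⟩ := (isCompact_Icc (a := (0 : ℝ)) (b := b)).exists_bound_of_continuousOn
    (hf.comp (continuous_id.prodMk (continuous_const (y := x)))).continuousOn
  have ev1 : ∀ᶠ q : ℝ × V in 𝓝 (s, x), dist q.2 (frozen X x s b q.1) < δ := by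
    have hc : Continuous fun q : ℝ × V => dist q.2 (frozen X x s b q.1) :=
      continuous_snd.dist (hZ.comp continuous_fst)
    refine (hc.tendsto (s, x)).eventually (gt_mem_nhds ?_)
    simpa [hX.frozen_of_le hsT le_rfl] using hδ0
  have ev2 : ∀ᶠ q : ℝ × V in 𝓝 (s, x),
      gronwallBound (dist q.2 x) K |M| (s - q.1) < min δ ρ₁ := by
    have hc : Continuous fun q : ℝ × V => gronwallBound (dist q.2 x) K |M| (s - q.1) := by
      simp only [gronwallBound_of_K_ne_0 (NNReal.coe_ne_zero.2 hK0.ne')]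
      fun_prop
    refine (hc.tendsto (s, x)).eventually (gt_mem_nhds ?_)
    simpa [gronwallBound_x0] using ⟨hδ0, hρ₁0⟩
  filter_upwards [ev1, ev2] with q h1 h2 hq t ht
  have hqT : q.1 ∈ Icc 0 T := ⟨hq.1, hq.2.trans hb⟩
  have hsol := hX.sol q.2 q.1 hqT
  rcases le_total s q.1 with hsq | hqs
  · exact right q.1 ⟨hsq, hq.2⟩ _ (hsol.mono le_rfl hb) (by rw [hX.start _ _ hqT]; exact h1.le) t ht
  · have hleft := dist_le_of_tube (g := fun _ => x) (g' := fun _ => 0) (η := |M|) (ρ := ρ₁)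
      hqs (abs_nonneg M)
      (fun r hr => by
        have := hK₁ r ⟨hq.1.trans hr.1, hr.2.trans hs.2⟩
        rwa [hX.frozen_of_le hsT hr.2] at this)
      (hsol.mono le_rfl hsT.2) continuousOn_const (fun _ _ => hasDerivWithinAt_const _ _ _)
      (fun r hr => by
        rw [dist_zero_left]
        exact (hM r ⟨hq.1.trans hr.1, hr.2.le.trans hs.2⟩).trans (le_abs_self M))
      (by rw [hX.start _ _ hqT]; exact h2.trans_le (min_le_right _ _))
    rw [hX.start _ _ hqT] at hleft
    rcases le_total t s with hts | hst
    · rw [hX.frozen_of_le hsT hts]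
      exact (hleft t ⟨ht.1, hts⟩).trans
        (h2.le.trans ((min_le_right _ _).trans (min_le_left _ _)))
    · refine right s ⟨le_rfl, hs.2⟩ _ (hsol.mono hqs hb) ?_ t ⟨hst, ht.2⟩
      rw [hX.frozen_of_le hsT le_rfl]
      exact (hleft s ⟨hqs, le_rfl⟩).trans (h2.le.trans (min_le_left _ _))

/-- Strict linearization of the time-`b` map of the flow, uniformly in the starting time: near
`(s, x, x)`, the difference `X y a b - X z a b` is `W a (y - z)` up to `ε ‖y - z‖`. The operator
`W a` solves the adjoint equation along the frozen trajectory through `(s, x)`, so it depends on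
`(s, x)` but not on `y`, `z` or `ε`. -/
lemma IsFlow.exists_linearization [CompleteSpace V] (hf : Continuous fun p : ℝ × V => f p.1 p.2)
    (hdiff : ∀ t x, HasFDerivAt (f t) (f' t x) x)
    (hf' : Continuous fun p : ℝ × V => f' p.1 p.2) (hX : IsFlow f X T) (x : V) {s b : ℝ}
    (hs : s ∈ Icc 0 b) (hb : b ≤ T) :
    ∃ W : ℝ → V →L[ℝ] V, Continuous W ∧ ∀ ε > 0, ∀ᶠ q : ℝ × V × V in 𝓝 (s, x, x),
      q.1 ∈ Icc 0 b →
        ‖X q.2.1 q.1 b - X q.2.2 q.1 b - W q.1 (q.2.1 - q.2.2)‖ ≤ ε * ‖q.2.1 - q.2.2‖ := by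
  have hZ : Continuous (frozen X x s b) := hX.continuous_frozen hs hb
  obtain ⟨W, hWb, hW⟩ := exists_adjoint (hf'.comp (continuous_id.prodMk hZ)) b
  have hWc : Continuous W := continuous_iff_continuousAt.2 fun t => (hW t).continuousAt
  refine ⟨W, hWc, fun ε hε => ?_⟩
  obtain ⟨C, hC⟩ := (isCompact_Icc (a := (0 : ℝ)) (b := b)).exists_bound_of_continuousOn
    hWc.continuousOn
  set M := |C| + 1 with hM
  have hM0 : 0 < M := by positivity
  have hWM : ∀ t ∈ Icc 0 b, ‖W t‖ ≤ M := fun t ht => by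
    linarith [hC t ht, le_abs_self C]
  obtain ⟨ρ₀, hρ₀, K, hK0, hK⟩ := exists_lipschitz_tube hdiff hf' hZ b
  have hb0 : 0 ≤ b := hs.1.trans hs.2
  -- `M` bounds `W`, `exp (K b)` bounds the growth of `y - z`, and the integration in time costs
  -- a factor at most `b ≤ b + 1`; the summand `1` keeps the denominator positive
  set ε₁ := ε / (M * Real.exp (K * b) * (b + 1)) with hε₁
  have hε₁0 : 0 < ε₁ := by positivity
  obtain ⟨ρ₁, hρ₁, hlin⟩ := exists_tube hf' hZ b hε₁0
  have hclose := hX.eventually_close hf hdiff hf' x hs hb (lt_min hρ₀ hρ₁)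
  have t1 : Tendsto (fun q : ℝ × V × V => (q.1, q.2.1)) (𝓝 (s, x, x)) (𝓝 (s, x)) :=
    Continuous.tendsto' (by fun_prop) _ _ rfl
  have t2 : Tendsto (fun q : ℝ × V × V => (q.1, q.2.2)) (𝓝 (s, x, x)) (𝓝 (s, x)) :=
    Continuous.tendsto' (by fun_prop) _ _ rfl
  filter_upwards [t1.eventually hclose, t2.eventually hclose]
  rintro ⟨a, y, z⟩ h1 h2 ha
  simp only at h1 h2 ha ⊢
  replace h1 := h1 ha
  replace h2 := h2 ha
  have haT : a ∈ Icc 0 T := ⟨ha.1, ha.2.trans hb⟩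
  have hu := (hX.sol y a haT).mono le_rfl hb
  have hv := (hX.sol z a haT).mono le_rfl hb
  have hbd : ∀ t ∈ Icc a b, ‖X y a t - X z a t‖ ≤ Real.exp (K * b) * ‖y - z‖ := by
    intro t ht
    have := dist_le_of_trajectories_ODE_of_mem (v := f) (K := K)
      (s := fun t => closedBall (frozen X x s b t) ρ₀)
      (fun r hr => hK r ⟨ha.1.trans hr.1, hr.2.le⟩) hu.cont hu.deriv
      (fun r hr => (h1 r ⟨hr.1, hr.2.le⟩).trans (min_le_left _ _)) hv.cont hv.deriv
      (fun r hr => (h2 r ⟨hr.1, hr.2.le⟩).trans (min_le_left _ _)) le_rfl t ht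
    rw [hX.start y a haT, hX.start z a haT, dist_eq_norm, dist_eq_norm] at this
    refine this.trans ?_
    rw [mul_comm]
    gcongr
    linarith [ht.2, ha.1]
  -- the terms `∓ W t (f' t Z (u - v))` coming from `W'` turn the derivative into a linearization
  -- error of `f` along the reference curve
  have hder : ∀ t ∈ Ico a b, HasDerivWithinAt (fun t => W t (X y a t - X z a t))
      (W t (f t (X y a t) - f t (X z a t) -
        f' t (frozen X x s b t) (X y a t - X z a t))) (Ici t) t := by
    intro t ht
    have := (hW t).hasDerivWithinAt (s := Ici t) |>.clm_apply ((hu.deriv t ht).sub (hv.deriv t ht))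
    refine this.congr_deriv ?_
    simp only [Function.comp, id, neg_apply, mul_apply_eq_comp,
      Pi.sub_apply, map_sub]
    abel
  have hfin := norm_image_sub_le_of_norm_deriv_right_le_segment
    (C := M * (ε₁ * (Real.exp (K * b) * ‖y - z‖)))
    (hWc.continuousOn.clm_apply (hu.cont.sub hv.cont)) hder (fun t ht => by
      have ht' : t ∈ Icc a b := ⟨ht.1, ht.2.le⟩
      have ht0 : t ∈ Icc 0 b := ⟨ha.1.trans ht.1, ht.2.le⟩
      refine (ContinuousLinearMap.le_opNorm _ _).trans ?_
      gcongr
      · exact hWM t ht0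
      · refine ((convex_closedBall _ ρ₁).norm_image_sub_le_of_norm_hasFDerivWithin_le'
          (fun w _ => (hdiff t w).hasFDerivWithinAt) (hlin t ht0)
          ((h2 t ht').trans (min_le_right _ _)) ((h1 t ht').trans (min_le_right _ _))).trans ?_
        gcongr
        exact hbd t ht') b ⟨ha.2, le_rfl⟩
  simp only [Pi.sub_apply, hWb, hX.start y a haT, hX.start z a haT,
    one_apply_eq_self] at hfin
  refine hfin.trans ?_
  calc M * (ε₁ * (Real.exp (K * b) * ‖y - z‖)) * (b - a)
      ≤ M * (ε₁ * (Real.exp (K * b) * ‖y - z‖)) * (b + 1) := by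
        gcongr
        linarith [ha.1]
    _ = ε * ‖y - z‖ := by rw [hε₁]; field_simp

/-- The flow at a fixed final time is jointly continuous in the starting time and point. -/
lemma IsFlow.continuousOn_start (hf : Continuous fun p : ℝ × V => f p.1 p.2)
    (hdiff : ∀ t x, HasFDerivAt (f t) (f' t x) x)
    (hf' : Continuous fun p : ℝ × V => f' p.1 p.2) (hX : IsFlow f X T) {b : ℝ} (hb : b ≤ T) :
    ContinuousOn (fun q : ℝ × V => X q.2 q.1 b) (Icc 0 b ×ˢ univ) := by
  rintro ⟨s, x⟩ ⟨hs, -⟩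
  refine Metric.nhds_basis_closedBall.tendsto_right_iff.2 fun ε hε => ?_
  filter_upwards [nhdsWithin_le_nhds (hX.eventually_close hf hdiff hf' x hs hb hε),
    self_mem_nhdsWithin] with q h hq
  have := h hq.1 b ⟨hq.1.2, le_rfl⟩
  rwa [frozen_of_mem ⟨hs.2, le_rfl⟩] at this

/-- Fixing `a = s` and `z = x` in the estimate of `IsFlow.exists_linearization` gives the derivative
at `x`. -/
lemma hasFDerivAt_of_linearization {W : ℝ → V →L[ℝ] V} {x : V} {s b : ℝ} (hs : s ∈ Icc 0 b)
    (hW : ∀ ε > 0, ∀ᶠ q : ℝ × V × V in 𝓝 (s, x, x), q.1 ∈ Icc 0 b →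
      ‖X q.2.1 q.1 b - X q.2.2 q.1 b - W q.1 (q.2.1 - q.2.2)‖ ≤ ε * ‖q.2.1 - q.2.2‖) :
    HasFDerivAt (fun z => X z s b) (W s) x := by
  refine .of_isLittleO (Asymptotics.isLittleO_iff.2 fun ε hε => ?_)
  have t1 : Tendsto (fun y : V => (s, y, x)) (𝓝 x) (𝓝 (s, x, x)) :=
    Continuous.tendsto' (by fun_prop) _ _ rfl
  filter_upwards [t1.eventually (hW ε hε)] with y hy using hy hs

/-- The flow is Fréchet differentiable with respect to the initial value. -/
lemma IsFlow.differentiableAt [CompleteSpace V] (hf : Continuous fun p : ℝ × V => f p.1 p.2)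
    (hdiff : ∀ t x, HasFDerivAt (f t) (f' t x) x)
    (hf' : Continuous fun p : ℝ × V => f' p.1 p.2) (hX : IsFlow f X T) (x : V) {s b : ℝ}
    (hs : s ∈ Icc 0 b) (hb : b ≤ T) : DifferentiableAt ℝ (fun z => X z s b) x := by
  obtain ⟨W, -, hW⟩ := hX.exists_linearization hf hdiff hf' x hs hb
  exact (hasFDerivAt_of_linearization hs hW).differentiableAt

/-- The derivative with respect to the initial value is jointly continuous, in operator norm, in
the starting time and point. At a nearby `(a, y)` the linearization made at `(s, x)` bounds the
difference quotients of `z ↦ X z a b - W a z`, so the derivative there is close to `W a`. -/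
lemma IsFlow.continuousOn_fderiv [CompleteSpace V] (hf : Continuous fun p : ℝ × V => f p.1 p.2)
    (hdiff : ∀ t x, HasFDerivAt (f t) (f' t x) x)
    (hf' : Continuous fun p : ℝ × V => f' p.1 p.2) (hX : IsFlow f X T) {b : ℝ} (hb : b ≤ T) :
    ContinuousOn (fun q : ℝ × V => fderiv ℝ (fun z => X z q.1 b) q.2) (Icc 0 b ×ˢ univ) := by
  rintro ⟨s, x⟩ ⟨hs, -⟩
  obtain ⟨W, hWc, hW⟩ := hX.exists_linearization hf hdiff hf' x hs hb
  refine Metric.nhds_basis_closedBall.tendsto_right_iff.2 fun ε hε => ?_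
  have t1 : Tendsto (fun q : ℝ × V => (q.1, q.2, q.2)) (𝓝 (s, x)) (𝓝 (s, x, x)) :=
    Continuous.tendsto' (by fun_prop) _ _ rfl
  have e1 := t1.eventually (eventually_eventually_nhds.2 (hW (ε / 2) (half_pos hε)))
  have e2 : ∀ᶠ q : ℝ × V in 𝓝 (s, x), dist (W q.1) (W s) < ε / 2 :=
    ((hWc.comp continuous_fst).tendsto (s, x)).eventually (ball_mem_nhds _ (half_pos hε))
  filter_upwards [nhdsWithin_le_nhds e1, nhdsWithin_le_nhds e2, self_mem_nhdsWithin]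
  rintro ⟨a, y⟩ h1 h2 ⟨ha, -⟩
  simp only at h1 h2 ha ⊢
  rw [(hasFDerivAt_of_linearization hs hW).fderiv]
  have t2 : Tendsto (fun z : V => (a, z, y)) (𝓝 y) (𝓝 (a, y, y)) :=
    Continuous.tendsto' (by fun_prop) _ _ rfl
  have hd := (hX.differentiableAt hf hdiff hf' y ha hb).hasFDerivAt
  have h3 : ‖fderiv ℝ (fun z => X z a b) y - W a‖ ≤ ε / 2 := by
    refine (hd.sub (W a).hasFDerivAt).le_of_lip' (half_pos hε).le ?_
    filter_upwards [t2.eventually h1] with z hz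
    have := hz ha
    rw [map_sub] at this
    convert this using 2
    simp only [Pi.sub_apply]
    abel
  have h4 := dist_triangle (fderiv ℝ (fun z => X z a b) y) (W a) (W s)
  rw [dist_eq_norm _ (W a)] at h4
  exact mem_closedBall.2 (by linarith)

end Flow

/-! ### The perturbed solution -/

lemma continuousOn_primitive {F : Type*} [NormedAddCommGroup F] [NormedSpace ℝ F] {g : ℝ → F}
    {s t : ℝ} (hst : s ≤ t) (hg : IntervalIntegrable g volume s t) :
    ContinuousOn (fun τ => ∫ r in s..τ, g r) (Icc s t) := by
  have := intervalIntegral.continuousOn_primitive_interval' hg left_mem_uIcc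
  rwa [uIcc_of_le hst] at this

/-- A continuous, hence bounded, family of operators applied to an integrable function is
integrable. -/
lemma intervalIntegrable_clm_apply {E : ℝ → V} {D : ℝ → V →L[ℝ] V} {t : ℝ} (ht : 0 ≤ t)
    (hD : ContinuousOn D (Icc 0 t)) (hE : IntervalIntegrable E volume 0 t) :
    IntervalIntegrable (fun τ => D τ (E τ)) volume 0 t := by
  obtain ⟨C, hC⟩ := isCompact_Icc.exists_bound_of_continuousOn hD
  rw [intervalIntegrable_iff_integrableOn_Icc_of_le ht] at hE ⊢
  refine Integrable.mono' (hE.norm.const_mul C) ?_ ?_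
  · exact isBoundedBilinearMap_apply.continuous.comp_aestronglyMeasurable
      ((hD.aestronglyMeasurable measurableSet_Icc).prodMk hE.aestronglyMeasurable)
  · refine ae_restrict_of_forall_mem measurableSet_Icc fun τ hτ => ?_
    exact (D τ).le_of_opNorm_le (hC τ hτ) (E τ)

section Perturbed

variable [CompleteSpace V] {f : ℝ → V → V} {f' : ℝ → V → V →L[ℝ] V} {X : V → ℝ → ℝ → V}
  {T : ℝ} {Y E : ℝ → V}

/-- Local form of the formula: to the right of `τ`, the increments of `X (Y c) c t` and of
`∫ r in τ..c, D r (E r)`, with `D r` the derivative of the flow at `Y r`, differ by at most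
`ε ∫ r in τ..c, (1 + ‖E r‖)`. The term `‖E r‖` in the bound makes differentiability of the
primitive of `E` at `τ` unnecessary, so that the bound holds for every `τ`, not only for
almost every `τ`. -/
lemma IsFlow.eventually_increment_le (hf : Continuous fun p : ℝ × V => f p.1 p.2)
    (hdiff : ∀ t x, HasFDerivAt (f t) (f' t x) x)
    (hf' : Continuous fun p : ℝ × V => f' p.1 p.2) (hX : IsFlow f X T)
    (hY : ContinuousOn Y (Icc 0 T)) (hE : IntervalIntegrable E volume 0 T)
    (hYeq : ∀ a ∈ Icc 0 T, ∀ b ∈ Icc a T, Y b - Y a = ∫ τ in a..b, (f τ (Y τ) + E τ))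
    {t τ : ℝ} (htT : t ≤ T) (hτ : τ ∈ Ico 0 t) {ε : ℝ} (hε : 0 < ε) :
    ∀ᶠ c in 𝓝[>] τ, ‖X (Y c) c t - X (Y τ) τ t -
      ∫ r in τ..c, fderiv ℝ (fun z => X z r t) (Y r) (E r)‖ ≤ ε * ∫ r in τ..c, (1 + ‖E r‖) := by
  have hτt : τ ∈ Icc 0 t := ⟨hτ.1, hτ.2.le⟩
  have hτT : τ ∈ Icc 0 T := ⟨hτ.1, hτ.2.le.trans htT⟩
  have hYt : ContinuousOn Y (Icc 0 t) := hY.mono (Icc_subset_Icc_right htT)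
  set D : ℝ → V →L[ℝ] V := fun r => fderiv ℝ (fun z => X z r t) (Y r) with hDdef
  have hD : ContinuousOn D (Icc 0 t) :=
    (hX.continuousOn_fderiv hf hdiff hf' htT).comp (continuousOn_id.prodMk hYt)
      fun r hr => ⟨hr, mem_univ _⟩
  obtain ⟨W, hWc, hW⟩ := hX.exists_linearization hf hdiff hf' (Y τ) hτt htT
  have hWτ : W τ = D τ := (hasFDerivAt_of_linearization hτt hW).fderiv.symm
  -- the unperturbed trajectory through `(τ, Y τ)`
  set u := X (Y τ) τ with hu
  have husol : IsSol f u τ T := hX.sol _ _ hτT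
  have huτ : u τ = Y τ := hX.start _ _ hτT
  -- `3 + ‖W τ‖` counts the four error terms in `hdecomp` below, one of them weighted by `‖W τ‖`
  set η := min 1 (ε / (3 + ‖W τ‖)) with hη
  have hη0 : 0 < η := lt_min one_pos (by positivity)
  have hη1 : η ≤ 1 := min_le_left _ _
  have hηε : (3 + ‖W τ‖) * η ≤ ε := by
    rw [mul_comm, ← le_div_iff₀ (by positivity)]
    exact min_le_right _ _
  -- one-sided continuity at `τ` of all the curves involved
  have hnhds : ∀ {b}, τ < b → 𝓝[≥] τ = 𝓝[Icc τ b] τ := fun h => (nhdsWithin_Icc_eq_nhdsGE h).symm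
  have hYr : Tendsto Y (𝓝[≥] τ) (𝓝 (Y τ)) := by
    rw [hnhds hτ.2]
    exact (hYt τ hτt).mono_left (nhdsWithin_mono _ (Icc_subset_Icc_left hτ.1))
  have hDr : Tendsto D (𝓝[≥] τ) (𝓝 (D τ)) := by
    rw [hnhds hτ.2]
    exact (hD τ hτt).mono_left (nhdsWithin_mono _ (Icc_subset_Icc_left hτ.1))
  have hur : Tendsto u (𝓝[≥] τ) (𝓝 (Y τ)) := by
    rw [hnhds (hτ.2.trans_le htT), ← huτ]
    exact husol.cont τ ⟨le_rfl, hτT.2⟩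
  have hid : Tendsto (fun r : ℝ => r) (𝓝[≥] τ) (𝓝 τ) := nhdsWithin_le_nhds
  have hfr : Tendsto (fun r => f r (Y r) - f r (u r)) (𝓝[≥] τ) (𝓝 0) := by
    have h1 := (hf.tendsto (τ, Y τ)).comp (hid.prodMk_nhds hYr)
    have h2 := (hf.tendsto (τ, Y τ)).comp (hid.prodMk_nhds hur)
    simpa using h1.sub h2
  have hev : ∀ᶠ r in 𝓝[≥] τ, ‖f r (Y r) - f r (u r)‖ ≤ η ∧ ‖W τ - D r‖ ≤ η ∧
      ‖W r - W τ‖ ≤ η ∧ (r ∈ Icc 0 t → ‖X (Y r) r t - X (u r) r t - W r (Y r - u r)‖ ≤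
        η * ‖Y r - u r‖) := by
    refine .and ?_ (.and ?_ (.and ?_ ?_))
    · filter_upwards [hfr (closedBall_mem_nhds _ hη0)] with r hr
      simpa [dist_eq_norm] using hr
    · filter_upwards [hDr (closedBall_mem_nhds _ hη0)] with r hr
      rw [hWτ, norm_sub_rev]
      simpa [dist_eq_norm] using hr
    · filter_upwards [(hWc.tendsto τ).comp hid (closedBall_mem_nhds _ hη0)] with r hr
      simpa [dist_eq_norm] using hr
    · exact (hid.prodMk_nhds (hYr.prodMk_nhds hur)).eventually (hW η hη0)
  obtain ⟨b, hb, hbsub⟩ := mem_nhdsGE_iff_exists_Icc_subset.1 hev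
  filter_upwards [Ioc_mem_nhdsGT (lt_min hb hτ.2)] with c hc
  have hcb : c ≤ b := hc.2.trans (min_le_left _ _)
  have hct : c ≤ t := hc.2.trans (min_le_right _ _)
  have hP := fun r (hr : r ∈ Icc τ c) => hbsub ⟨hr.1, hr.2.trans hcb⟩
  obtain ⟨-, -, hWc', hlin⟩ := hP c ⟨hc.1.le, le_rfl⟩
  replace hlin := hlin ⟨hτ.1.trans hc.1.le, hct⟩
  have hsub : Icc τ c ⊆ Icc 0 T := Icc_subset_Icc hτ.1 (hct.trans htT)
  have hsubt : Icc τ c ⊆ Icc 0 t := Icc_subset_Icc hτ.1 hct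
  have hτc : uIcc τ c = Icc τ c := uIcc_of_le hc.1.le
  have hiE : IntervalIntegrable E volume τ c := hE.mono_set (by
    rw [hτc, uIcc_of_le (hτT.1.trans hτT.2)]; exact hsub)
  have hifY : IntervalIntegrable (fun r => f r (Y r)) volume τ c :=
    ContinuousOn.intervalIntegrable_of_Icc hc.1.le
      (hf.comp_continuousOn (continuousOn_id.prodMk (hY.mono hsub)))
  have hifu : IntervalIntegrable (fun r => f r (u r)) volume τ c :=
    ContinuousOn.intervalIntegrable_of_Icc hc.1.le
      (hf.comp_continuousOn (continuousOn_id.prodMk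
        (husol.cont.mono (Icc_subset_Icc_right (hct.trans htT)))))
  have hiDE : IntervalIntegrable (fun r => D r (E r)) volume τ c :=
    (intervalIntegrable_clm_apply (hτt.1.trans hτt.2) hD (hE.mono_set (by
      rw [uIcc_of_le (hτt.1.trans hτt.2), uIcc_of_le (hτT.1.trans hτT.2)]
      exact Icc_subset_Icc_right htT))).mono_set (by
        rw [hτc, uIcc_of_le (hτt.1.trans hτt.2)]; exact hsubt)
  have hiW : IntervalIntegrable (fun r => W τ (E r)) volume τ c :=
    ⟨(W τ).integrable_comp hiE.1, (W τ).integrable_comp hiE.2⟩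
  have husolc : u c - u τ = ∫ r in τ..c, f r (u r) :=
    (intervalIntegral.integral_eq_sub_of_hasDeriv_right_of_le hc.1.le
      (husol.cont.mono (Icc_subset_Icc_right (hct.trans htT)))
      (fun r hr => (husol.deriv r ⟨hr.1.le, hr.2.trans_le (hct.trans htT)⟩).mono
        Ioi_subset_Ici_self) hifu).symm
  -- `Y c - u c` splits into the drift difference `P`, of order `η (c - τ)`, and the accumulated
  -- perturbation `Q`
  set P := ∫ r in τ..c, (f r (Y r) - f r (u r)) with hPdef
  set Q := ∫ r in τ..c, E r with hQdef
  have hΔ : Y c - u c = P + Q := by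
    rw [hPdef, intervalIntegral.integral_sub hifY hifu, ← husolc, huτ]
    have := hYeq τ hτT c ⟨hc.1.le, hct.trans htT⟩
    rw [intervalIntegral.integral_add hifY hiE] at this
    rw [sub_eq_iff_eq_add.1 this]
    abel
  set m := ∫ r in τ..c, (1 + ‖E r‖) with hm
  have hm' : m = (c - τ) + ∫ r in τ..c, ‖E r‖ := by
    rw [hm, intervalIntegral.integral_add (by simp) hiE.norm]
    simp
  have hEn : 0 ≤ ∫ r in τ..c, ‖E r‖ :=
    intervalIntegral.integral_nonneg hc.1.le fun _ _ => norm_nonneg _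
  have hcτ : 0 < c - τ := sub_pos.2 hc.1
  have hPn : ‖P‖ ≤ η * (c - τ) := by
    have := intervalIntegral.norm_integral_le_of_norm_le_const
      (a := τ) (b := c) (C := η) (f := fun r => f r (Y r) - f r (u r)) fun r hr => by
        rw [uIoc_of_le hc.1.le] at hr
        exact (hP r ⟨hr.1.le, hr.2⟩).1
    rwa [abs_of_pos hcτ] at this
  have hQn : ‖Q‖ ≤ ∫ r in τ..c, ‖E r‖ := intervalIntegral.norm_integral_le_integral_norm hc.1.le
  have hΔn : ‖Y c - u c‖ ≤ m := by
    rw [hΔ, hm']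
    refine (norm_add_le _ _).trans (add_le_add (hPn.trans ?_) hQn)
    exact mul_le_of_le_one_left hcτ.le hη1
  have hR : ‖W τ Q - ∫ r in τ..c, D r (E r)‖ ≤ η * ∫ r in τ..c, ‖E r‖ := by
    rw [hQdef, ← (W τ).intervalIntegral_comp_comm hiE, ← intervalIntegral.integral_sub hiW hiDE,
      ← intervalIntegral.integral_const_mul]
    refine intervalIntegral.norm_integral_le_of_norm_le hc.1.le ?_ (hiE.norm.const_mul η)
    refine Eventually.of_forall fun r hr => ?_
    exact (W τ - D r).le_of_opNorm_le (hP r ⟨hr.1.le, hr.2⟩).2.1 (E r)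
  have hm0 : 0 ≤ m := (norm_nonneg _).trans hΔn
  have hsg : X (Y τ) τ t = X (u c) c t := hX.semigroup hdiff hf' hτ.1 hc.1.le hct htT
  -- linearization error at the starting time `c`, variation of `W` from `τ` to `c`, drift
  -- difference, variation of `D` over `[τ, c]`
  have hdecomp : X (Y c) c t - X (Y τ) τ t - ∫ r in τ..c, D r (E r) =
      (X (Y c) c t - X (u c) c t - W c (Y c - u c)) + (W c - W τ) (Y c - u c) + W τ P +
        (W τ Q - ∫ r in τ..c, D r (E r)) := by
    rw [hsg, sub_apply]
    have : W τ (Y c - u c) = W τ P + W τ Q := by rw [hΔ, map_add]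
    rw [this]
    abel
  have n1 : ‖X (Y c) c t - X (u c) c t - W c (Y c - u c)‖ ≤ η * m :=
    hlin.trans (by gcongr)
  have n2 : ‖(W c - W τ) (Y c - u c)‖ ≤ η * m :=
    ((W c - W τ).le_of_opNorm_le hWc' _).trans (by gcongr)
  have n3 : ‖W τ P‖ ≤ ‖W τ‖ * (η * m) :=
    ((W τ).le_opNorm P).trans (by
      gcongr
      exact hPn.trans (by gcongr; linarith))
  have n4 : ‖W τ Q - ∫ r in τ..c, D r (E r)‖ ≤ η * m :=
    hR.trans (by gcongr; linarith)
  rw [hdecomp]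
  calc _ ≤ η * m + η * m + ‖W τ‖ * (η * m) + η * m :=
        (norm_add_le _ _).trans (add_le_add ((norm_add_le _ _).trans
          (add_le_add ((norm_add_le _ _).trans (add_le_add n1 n2)) n3)) n4)
    _ = (3 + ‖W τ‖) * η * m := by ring
    _ ≤ ε * m := by gcongr

/-- The Alekseev–Gröbner formula for a globally defined continuous vector field with continuous
derivative, in terms of `IsFlow`. -/
lemma IsFlow.perturbation_formula (hf : Continuous fun p : ℝ × V => f p.1 p.2)
    (hdiff : ∀ t x, HasFDerivAt (f t) (f' t x) x)
    (hf' : Continuous fun p : ℝ × V => f' p.1 p.2) (hX : IsFlow f X T)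
    (hY : ContinuousOn Y (Icc 0 T)) (hE : IntervalIntegrable E volume 0 T)
    (hYeq : ∀ a ∈ Icc 0 T, ∀ b ∈ Icc a T, Y b - Y a = ∫ τ in a..b, (f τ (Y τ) + E τ))
    {s t : ℝ} (hs : 0 ≤ s) (hst : s ≤ t) (htT : t ≤ T) :
    Y t = X (Y s) s t + ∫ τ in s..t, fderiv ℝ (fun z => X z τ t) (Y τ) (E τ) := by
  have h0t : 0 ≤ t := hs.trans hst
  have hYt : ContinuousOn Y (Icc 0 t) := hY.mono (Icc_subset_Icc_right htT)
  have hD : ContinuousOn (fun r => fderiv ℝ (fun z => X z r t) (Y r)) (Icc 0 t) :=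
    (hX.continuousOn_fderiv hf hdiff hf' htT).comp (continuousOn_id.prodMk hYt)
      fun r hr => ⟨hr, mem_univ _⟩
  have hEt : IntervalIntegrable E volume 0 t := hE.mono_set (by
    rw [uIcc_of_le h0t, uIcc_of_le (h0t.trans htT)]
    exact Icc_subset_Icc_right htT)
  have hsub : ∀ a ∈ Icc s t, ∀ b ∈ Icc s t, uIcc a b ⊆ uIcc 0 t := fun a ha b hb => by
    rw [uIcc_of_le h0t]
    exact uIcc_subset_Icc ⟨hs.trans ha.1, ha.2⟩ ⟨hs.trans hb.1, hb.2⟩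
  have hiDE : ∀ a ∈ Icc s t, ∀ b ∈ Icc s t, IntervalIntegrable
      (fun τ => fderiv ℝ (fun z => X z τ t) (Y τ) (E τ)) volume a b := fun a ha b hb =>
    (intervalIntegrable_clm_apply h0t hD hEt).mono_set (hsub a ha b hb)
  have hi1 : ∀ a ∈ Icc s t, ∀ b ∈ Icc s t, IntervalIntegrable (fun τ => 1 + ‖E τ‖) volume a b :=
    fun a ha b hb => (intervalIntegrable_const.add hEt.norm).mono_set (hsub a ha b hb)
  have hss : s ∈ Icc s t := ⟨le_rfl, hst⟩
  have htt : t ∈ Icc s t := ⟨hst, le_rfl⟩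
  set G : ℝ → V := fun τ => X (Y τ) τ t -
    ∫ r in s..τ, fderiv ℝ (fun z => X z r t) (Y r) (E r) with hG
  have hGc : ContinuousOn G (Icc s t) :=
    ((hX.continuousOn_start hf hdiff hf' htT).comp (continuousOn_id.prodMk
      (hYt.mono (Icc_subset_Icc_left hs))) fun r hr => ⟨⟨hs.trans hr.1, hr.2⟩, mem_univ _⟩).sub
      (continuousOn_primitive hst (hiDE s hss t htt))
  have hmain : ∀ ε > 0, ‖G t - G s‖ ≤ ε * ∫ r in s..t, (1 + ‖E r‖) := by
    intro ε hε
    have hmc : ContinuousOn (fun τ => ∫ r in s..τ, (1 + ‖E r‖)) (Icc s t) :=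
      continuousOn_primitive hst (hi1 s hss t htt)
    -- continuous induction on `τ ∈ [s, t]`
    have hall : Icc s t ⊆ {τ | ‖G τ - G s‖ - ε * ∫ r in s..τ, (1 + ‖E r‖) ≤ 0} := by
      refine IsClosed.Icc_subset_of_forall_mem_nhdsWithin ?_ (by simp) ?_
      · have : IsClosed (Icc s t ∩
            (fun τ => ‖G τ - G s‖ - ε * ∫ r in s..τ, (1 + ‖E r‖)) ⁻¹' Iic 0) :=
          ((hGc.sub continuousOn_const).norm.sub (continuousOn_const.mul
            hmc)).preimage_isClosed_of_isClosed isClosed_Icc isClosed_Iic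
        rwa [inter_comm] at this
      · rintro τ ⟨hτS, hτ⟩
        have hτ' : τ ∈ Icc s t := ⟨hτ.1, hτ.2.le⟩
        filter_upwards [hX.eventually_increment_le hf hdiff hf' hY hE hYeq htT
          ⟨hs.trans hτ.1, hτ.2⟩ hε, Ioc_mem_nhdsGT hτ.2] with c hc hcm
        have hc' : c ∈ Icc s t := ⟨hτ.1.trans hcm.1.le, hcm.2⟩
        simp only [mem_ofPred_eq] at hτS ⊢
        have e1 : G c - G s = (G τ - G s) + (X (Y c) c t - X (Y τ) τ t -
            ∫ r in τ..c, fderiv ℝ (fun z => X z r t) (Y r) (E r)) := by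
          simp only [hG]
          rw [← intervalIntegral.integral_add_adjacent_intervals (hiDE s hss τ hτ')
            (hiDE τ hτ' c hc')]
          abel
        rw [e1, ← intervalIntegral.integral_add_adjacent_intervals (hi1 s hss τ hτ')
          (hi1 τ hτ' c hc'), mul_add]
        linarith [norm_add_le (G τ - G s) (X (Y c) c t - X (Y τ) τ t -
            ∫ r in τ..c, fderiv ℝ (fun z => X z r t) (Y r) (E r))]
    exact sub_nonpos.1 (hall htt)
  have hGG : G t - G s = 0 := by
    rw [← norm_le_zero_iff]
    refine ge_of_tendsto (x := 𝓝[>] (0 : ℝ)) (b := ‖G t - G s‖)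
      (f := fun ε => ε * ∫ r in s..t, (1 + ‖E r‖)) ?_ ?_
    · exact (Continuous.tendsto' (by fun_prop) _ _ (by simp)).mono_left nhdsWithin_le_nhds
    · filter_upwards [self_mem_nhdsWithin] with ε hε using hmain ε hε
  simp only [hG, intervalIntegral.integral_same, sub_zero,
    hX.start (Y t) t ⟨h0t, htT⟩] at hGG
  rw [sub_sub, sub_eq_zero] at hGG
  rw [hGG, add_comm]

end Perturbed

end AlekseevGroebner

/-- The Alekseev–Gröbner formula in Banach spaces:
if `Y` solves the perturbed equation `Y_t = Y_0 + ∫_0^t (f(τ,Y_τ) + E_τ) dτ` and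
`X^x_{s,·}` is the flow of the unperturbed equation with `C^{0,1}` vector field `f`,
then for all `0 ≤ s ≤ t ≤ T`,
`Y_t = X^{Y_s}_{s,t} + ∫_s^t (∂/∂x X^{Y_τ}_{τ,t}) E_τ dτ`,
together with differentiability, measurability, and integrability of the integrand. -/
theorem alekseev_groebner
    {V : Type*} [NormedAddCommGroup V] [NormedSpace ℝ V] [CompleteSpace V]
    [Nontrivial V] [MeasurableSpace V] [BorelSpace V] {T : ℝ} (hT : 0 < T)
    (f : ℝ → V → V) (f' : ℝ → V → V →L[ℝ] V)
    (hf : ContinuousOn (fun p : ℝ × V => f p.1 p.2) (Set.Icc 0 T ×ˢ Set.univ))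
    (hdiff : ∀ t ∈ Set.Icc (0 : ℝ) T, ∀ x : V, HasFDerivAt (f t) (f' t x) x)
    (hf' : ContinuousOn (fun p : ℝ × V => f' p.1 p.2) (Set.Icc 0 T ×ˢ Set.univ))
    (X : V → ℝ → ℝ → V)
    (hXcont : ∀ (x : V), ∀ s ∈ Set.Icc (0 : ℝ) T, ContinuousOn (X x s) (Set.Icc s T))
    (hXeq : ∀ (x : V), ∀ s ∈ Set.Icc (0 : ℝ) T, ∀ t ∈ Set.Icc s T,
      X x s t = x + ∫ τ in s..t, f τ (X x s τ))
    (Y E : ℝ → V) (hYmeas : StronglyMeasurable Y) (hEmeas : StronglyMeasurable E)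
    (hfYint : IntervalIntegrable (fun τ => f τ (Y τ)) volume 0 T)
    (hEint : IntervalIntegrable E volume 0 T)
    (hYeq : ∀ t ∈ Set.Icc (0 : ℝ) T, Y t = Y 0 + ∫ τ in (0 : ℝ)..t, (f τ (Y τ) + E τ)) :
    (∀ s ∈ Set.Icc (0 : ℝ) T, ∀ t ∈ Set.Icc s T, ∀ x : V,
      DifferentiableAt ℝ (fun z : V => X z s t) x) ∧
    (∀ t ∈ Set.Icc (0 : ℝ) T,
      StronglyMeasurable
        (fun τ : Set.Icc (0 : ℝ) t => fderiv ℝ (fun z : V => X z τ t) (Y τ) (E τ))) ∧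
    (∀ t ∈ Set.Icc (0 : ℝ) T,
      IntervalIntegrable (fun τ => fderiv ℝ (fun z : V => X z τ t) (Y τ) (E τ))
        volume 0 t) ∧
    (∀ s ∈ Set.Icc (0 : ℝ) T, ∀ t ∈ Set.Icc s T,
      Y t = X (Y s) s t + ∫ τ in s..t, fderiv ℝ (fun z : V => X z τ t) (Y τ) (E τ)) := by
  -- the hypotheses on `f` concern times in `[0, T]` only; clamping the time to `[0, T]` extends the
  -- vector field to all times without changing the equations for `X` and `Y`
  have hT0 := hT.le
  have hproj : ∀ t ∈ Set.Icc (0 : ℝ) T, ((Set.projIcc 0 T hT0 t : Set.Icc 0 T) : ℝ) = t :=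
    fun t ht => by rw [Set.projIcc_of_mem hT0 ht]
  have hpc : Continuous fun p : ℝ × V => (((Set.projIcc 0 T hT0 p.1 : Set.Icc 0 T) : ℝ), p.2) :=
    ((continuous_subtype_val.comp continuous_projIcc).comp continuous_fst).prodMk continuous_snd
  have hpm : ∀ p : ℝ × V, (((Set.projIcc 0 T hT0 p.1 : Set.Icc 0 T) : ℝ), p.2) ∈
      Set.Icc 0 T ×ˢ (Set.univ : Set V) := fun p => ⟨(Set.projIcc 0 T hT0 p.1).2, Set.mem_univ _⟩
  set F : ℝ → V → V := fun t => f (Set.projIcc 0 T hT0 t) with hF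
  set F' : ℝ → V → V →L[ℝ] V := fun t => f' (Set.projIcc 0 T hT0 t) with hF'
  have hFf : ∀ t ∈ Set.Icc (0 : ℝ) T, F t = f t := fun t ht => by simp only [hF, hproj t ht]
  have hFc : Continuous fun p : ℝ × V => F p.1 p.2 := hf.comp_continuous hpc hpm
  have hFc' : Continuous fun p : ℝ × V => F' p.1 p.2 := hf'.comp_continuous hpc hpm
  have hFd : ∀ t x, HasFDerivAt (F t) (F' t x) x := fun t x =>
    hdiff _ (Set.projIcc 0 T hT0 t).2 x
  have hX : AlekseevGroebner.IsFlow F X T := by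
    refine ⟨fun x s hs => by simpa using hXeq x s hs s ⟨le_rfl, hs.2⟩, fun x s hs =>
      AlekseevGroebner.isSol_of_integral (x := x) hFc (hXcont x s hs) fun t ht => ?_⟩
    rw [hXeq x s hs t ht]
    congr 1
    refine intervalIntegral.integral_congr fun τ hτ => ?_
    rw [Set.uIcc_of_le ht.1] at hτ
    simp only [hFf τ ⟨hs.1.trans hτ.1, hτ.2.trans ht.2⟩]
  have hYint := hfYint.add hEint
  -- `Y` is continuous, being the primitive of an integrable function
  have hYc : ContinuousOn Y (Set.Icc 0 T) := by
    have := intervalIntegral.continuousOn_primitive_interval' hYint Set.left_mem_uIcc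
    rw [Set.uIcc_of_le hT0] at this
    exact (continuousOn_const.add this).congr hYeq
  have hYF : ∀ a ∈ Set.Icc 0 T, ∀ b ∈ Set.Icc a T,
      Y b - Y a = ∫ τ in a..b, (F τ (Y τ) + E τ) := by
    intro a ha b hb
    have h0 : (0 : ℝ) ∈ Set.uIcc 0 T := Set.left_mem_uIcc
    have hb' : b ∈ Set.Icc 0 T := ⟨ha.1.trans hb.1, hb.2⟩
    have hsub : ∀ c ∈ Set.Icc 0 T, IntervalIntegrable (fun τ => f τ (Y τ) + E τ) volume 0 c :=
      fun c hc => hYint.mono_set (Set.uIcc_subset_uIcc h0 (by rwa [Set.uIcc_of_le hT0]))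
    rw [hYeq b hb', hYeq a ha, add_sub_add_left_eq_sub,
      intervalIntegral.integral_interval_sub_left (hsub b hb') (hsub a ha)]
    refine intervalIntegral.integral_congr fun τ hτ => ?_
    rw [Set.uIcc_of_le hb.1] at hτ
    simp only [hFf τ ⟨ha.1.trans hτ.1, hτ.2.trans hb.2⟩]
  have hD : ∀ t ∈ Set.Icc (0 : ℝ) T,
      ContinuousOn (fun τ => fderiv ℝ (fun z => X z τ t) (Y τ)) (Set.Icc 0 t) := fun t ht =>
    (hX.continuousOn_fderiv hFc hFd hFc' ht.2).comp
      (continuousOn_id.prodMk (hYc.mono (Set.Icc_subset_Icc_right ht.2)))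
      fun r hr => ⟨hr, Set.mem_univ _⟩
  refine ⟨fun s hs t ht x => hX.differentiableAt hFc hFd hFc' x ⟨hs.1, ht.1⟩ ht.2,
    fun t ht => ?_, fun t ht => ?_, fun s hs t ht =>
      hX.perturbation_formula hFc hFd hFc' hYc hEint hYF hs.1 ht.1 ht.2⟩
  · have h1 : StronglyMeasurable fun τ : Set.Icc (0 : ℝ) t =>
        fderiv ℝ (fun z => X z τ t) (Y τ) := (hD t ht).domRestrict.stronglyMeasurable
    exact isBoundedBilinearMap_apply.continuous.comp_stronglyMeasurable
      (h1.prodMk (hEmeas.comp_measurable measurable_subtype_coe))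
  · exact AlekseevGroebner.intervalIntegrable_clm_apply ht.1 (hD t ht) (hEint.mono_set
      (Set.uIcc_subset_uIcc Set.left_mem_uIcc (by rwa [Set.uIcc_of_le hT0])))
end
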